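/- arXiv:0711.2844 — 2 statements merged into one kernel-verified Lean document; each statement's English description precedes it below -/
import Mathlib

section
/- Let G be a connected claw-free graph with maximum degree Δ(G) = 3 that contains no A_i for any i of the form i = 3j+1 (j a positive integer). Then G has a dynamic 3-coloring if and only if G is not isomorphic to a graph obtained from K_4 by subdividing one edge m times with m ≡ 0 or 1 (mod 3). -/
open SimpleGraph

/-- A dynamic `k`-coloring of `G`: a proper vertex coloring such that every vertex
with at least two neighbors sees at least two distinct colors among its neighbors. -/
def IsDynamicColoring {V : Type*} (G : SimpleGraph V) (k : ℕ) (c : V → Fin k) : Prop :=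
  (∀ ⦃u v : V⦄, G.Adj u v → c u ≠ c v) ∧
  ∀ v : V, 2 ≤ (G.neighborSet v).ncard →
    ∃ u w : V, G.Adj v u ∧ G.Adj v w ∧ c u ≠ c w

/-- The dynamic chromatic number: the least `k` admitting a dynamic `k`-coloring. -/
noncomputable def dynamicChromaticNumber {V : Type*} (G : SimpleGraph V) : ℕ :=
  sInf {k : ℕ | ∃ c : V → Fin k, IsDynamicColoring G k c}

/-- `K4sub m`: the graph obtained from `K_4` on `{a, b, c, d}` by subdividing the edge
`ab` `m` times. Vertices: `Sum.inl i` for `i : Fin (m+2)` is the path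
`a = p_0, w_1, …, w_m, b = p_{m+1}`, and `Sum.inr 0 = c`, `Sum.inr 1 = d`. -/
def K4sub (m : ℕ) : SimpleGraph (Fin (m + 2) ⊕ Fin 2) :=
  SimpleGraph.fromRel (fun x y =>
    match x, y with
    | Sum.inl i, Sum.inl j => (i : ℕ) + 1 = (j : ℕ)
    | Sum.inl i, Sum.inr _ => (i : ℕ) = 0 ∨ (i : ℕ) = m + 1
    | Sum.inr _, Sum.inl _ => False
    | Sum.inr _, Sum.inr _ => True)

/-- `G` is claw-free: no induced subgraph isomorphic to `K_{1,3}`. -/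
def ClawFree {V : Type*} (G : SimpleGraph V) : Prop :=
  ¬ ∃ v a b c : V, a ≠ b ∧ a ≠ c ∧ b ≠ c ∧
    G.Adj v a ∧ G.Adj v b ∧ G.Adj v c ∧ ¬ G.Adj a b ∧ ¬ G.Adj a c ∧ ¬ G.Adj b c

/-- `G` contains an `A_i`: a path on `i` vertices whose `i - 2` internal vertices have
degree 2 in `G` and whose two end-vertices have degree 3 in `G`. -/
def HasAPath {V : Type*} (G : SimpleGraph V) (i : ℕ) : Prop :=
  ∃ v : ℕ → V,
    (∀ a b : ℕ, a < i → b < i → v a = v b → a = b) ∧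
    (∀ a : ℕ, a + 1 < i → G.Adj (v a) (v (a + 1))) ∧
    (∀ a : ℕ, 0 < a → a + 1 < i → (G.neighborSet (v a)).ncard = 2) ∧
    (G.neighborSet (v 0)).ncard = 3 ∧
    (G.neighborSet (v (i - 1))).ncard = 3

/-- Every vertex either has at most two neighbors, or has three of which two are adjacent. -/
def SubcubicTriangled {V : Type*} (H : SimpleGraph V) : Prop :=
  ∀ v, (∃ x y, ∀ u, H.Adj v u → u = x ∨ u = y) ∨
    ∃ x y z, H.Adj v x ∧ H.Adj v y ∧ H.Adj v z ∧ H.Adj x y ∧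
      ∀ u, H.Adj v u → u = x ∨ u = y ∨ u = z

/-- The graph obtained from `H` by isolating the vertices in `D`. -/
def isolate {V : Type*} (H : SimpleGraph V) (D : Set V) : SimpleGraph V where
  Adj a b := H.Adj a b ∧ a ∉ D ∧ b ∉ D
  symm := ⟨fun _ _ h => ⟨h.1.symm, h.2.2, h.2.1⟩⟩
  loopless := ⟨fun _ h => h.1.ne rfl⟩

theorem subcubicTriangled_isolate {V : Type*} {H : SimpleGraph V} (h : SubcubicTriangled H)
    (D : Set V) : SubcubicTriangled (isolate H D) := by
  intro v
  rcases h v with ⟨x, y, hxy⟩ | ⟨x, y, z, hx, hy, hz, hxy, hu⟩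
  · exact Or.inl ⟨x, y, fun u hu => hxy u hu.1⟩
  · by_cases hv : v ∈ D
    · exact Or.inl ⟨x, y, fun u hu => absurd hv hu.2.1⟩
    by_cases hxD : x ∈ D
    · exact Or.inl ⟨y, z, fun u hu' => by
        rcases hu u hu'.1 with rfl | h | h
        · exact absurd hxD hu'.2.2
        · exact Or.inl h
        · exact Or.inr h⟩
    by_cases hyD : y ∈ D
    · exact Or.inl ⟨x, z, fun u hu' => by
        rcases hu u hu'.1 with h | rfl | h
        · exact Or.inl h
        · exact absurd hyD hu'.2.2
        · exact Or.inr h⟩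
    by_cases hzD : z ∈ D
    · exact Or.inl ⟨x, y, fun u hu' => by
        rcases hu u hu'.1 with h | h | rfl
        · exact Or.inl h
        · exact Or.inr h
        · exact absurd hzD hu'.2.2⟩
    exact Or.inr ⟨x, y, z, ⟨hx, hv, hxD⟩, ⟨hy, hv, hyD⟩, ⟨hz, hv, hzD⟩, ⟨hxy, hxD, hyD⟩,
      fun u hu' => hu u hu'.1⟩

theorem exists_fin_three_ne (α β : Fin 3) : ∃ γ, γ ≠ α ∧ γ ≠ β := by
  revert α β; decide

theorem exists_fin_three_rainbow (α β γ : Fin 3) (h : α ≠ β) :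
    ∃ p q r : Fin 3, p ≠ q ∧ p ≠ r ∧ q ≠ r ∧ p ≠ α ∧ q ≠ β ∧ r ≠ γ := by
  revert α β γ; decide

theorem exists_fin_three_compl (α : Fin 3) : ∃ p q : Fin 3, p ≠ q ∧ p ≠ α ∧ q ≠ α := by
  revert α; decide

/-- `H` contains no `K_4`. -/
def NoK4 {V : Type*} (H : SimpleGraph V) : Prop :=
  ∀ a b c d, H.Adj a b → H.Adj a c → H.Adj a d → H.Adj b c → H.Adj b d → H.Adj c d → False

theorem noK4_isolate {V : Type*} {H : SimpleGraph V} (h : NoK4 H) (D : Set V) :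
    NoK4 (isolate H D) :=
  fun a b c d h1 h2 h3 h4 h5 h6 => h a b c d h1.1 h2.1 h3.1 h4.1 h5.1 h6.1

/-- The graph obtained from `H` by isolating the vertices in `D` and joining `s` to `t`. -/
def isolateAddEdge {V : Type*} (H : SimpleGraph V) (D : Set V) (s t : V) (hst : s ≠ t) :
    SimpleGraph V where
  Adj a b := (H.Adj a b ∧ a ∉ D ∧ b ∉ D) ∨ (a = s ∧ b = t) ∨ (a = t ∧ b = s)
  symm := ⟨fun a b h => by
    rcases h with h | h | h
    · exact Or.inl ⟨h.1.symm, h.2.2, h.2.1⟩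
    · exact Or.inr (Or.inr ⟨h.2, h.1⟩)
    · exact Or.inr (Or.inl ⟨h.2, h.1⟩)⟩
  loopless := ⟨fun a h => by
    rcases h with h | h | h
    · exact h.1.ne rfl
    · exact hst (h.1.symm.trans h.2)
    · exact hst (h.2.symm.trans h.1)⟩

theorem noK4_isolateAddEdge {V : Type*} {H : SimpleGraph V} (h : NoK4 H) (D : Set V)
    {s t : V} (hst : s ≠ t)
    (hD : ∀ p q, H.Adj p q → H.Adj s p → H.Adj s q → H.Adj t p → H.Adj t q → False) :
    NoK4 (isolateAddEdge H D s t hst) := by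
  set H' := isolateAddEdge H D s t hst with hH'
  have key : ∀ a b c d, H'.Adj a c → H'.Adj a d → H'.Adj b c → H'.Adj b d → H'.Adj c d →
      a = s → b = t → False := by
    rintro a b c d h1 h2 h3 h4 h5 rfl rfl
    have n1 := h1.ne
    have n2 := h2.ne
    have n3 := h3.ne
    have n4 := h4.ne
    have old : ∀ u w, w ≠ a → w ≠ b → H'.Adj u w → H.Adj u w := by
      rintro u w hu hw (h | h | h)
      · exact h.1
      · exact absurd h.2 hw
      · exact absurd h.2 hu
    exact hD c d (old _ _ n2.symm n4.symm h5) (old _ _ n1.symm n3.symm h1)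
      (old _ _ n2.symm n4.symm h2) (old _ _ n1.symm n3.symm h3) (old _ _ n2.symm n4.symm h4)
  have old : ∀ a b c d, H'.Adj a b → H'.Adj a c → H'.Adj a d → H'.Adj b c → H'.Adj b d →
      H'.Adj c d → H.Adj a b := by
    rintro a b c d (h | h | h) h1 h2 h3 h4 h5
    · exact h.1
    · exact (key a b c d h1 h2 h3 h4 h5 h.1 h.2).elim
    · exact (key b a c d h3 h4 h1 h2 h5 h.2 h.1).elim
  intro a b c d hab hac had hbc hbd hcd
  exact h a b c d (old a b c d hab hac had hbc hbd hcd)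
    (old a c b d hac hab had hbc.symm hcd hbd)
    (old a d b c had hab hac hbd.symm hcd.symm hbc)
    (old b c a d hbc hab.symm hbd hac.symm hcd had)
    (old b d a c hbd hab.symm hbc had.symm hcd.symm hac)
    (old c d a b hcd hac.symm hbc.symm had.symm hbd.symm hab)

/-- Brooks' theorem for subcubic graphs whose vertices of degree 3 lie in triangles. -/
theorem exists_coloring_of_card_le {V : Type*} [Fintype V] (n : ℕ) :
    ∀ (H : SimpleGraph V) (S : Finset V), S.card ≤ n → (∀ u w, H.Adj u w → u ∈ S) →
      SubcubicTriangled H → NoK4 H → ∃ c : V → Fin 3, ∀ u w, H.Adj u w → c u ≠ c w := by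
  classical
  induction n with
  | zero =>
    intro H S hS hHS _ _
    refine ⟨fun _ => 0, fun u w h => ?_⟩
    have := hHS u w h
    simp_all
  | succ n ih =>
    intro H S hS hHS hT hK
    by_cases hlow : ∃ v ∈ S, ∃ x y, ∀ u, H.Adj v u → u = x ∨ u = y
    · obtain ⟨v, hv, x, y, hxy⟩ := hlow
      obtain ⟨c, hc⟩ := ih (isolate H {v}) (S.erase v)
        (by rw [Finset.card_erase_of_mem hv]; omega)
        (fun u w h => Finset.mem_erase.2 ⟨h.2.1, hHS u w h.1⟩) (subcubicTriangled_isolate hT _) (noK4_isolate hK _)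
      obtain ⟨γ, h1, h2⟩ := exists_fin_three_ne (c x) (c y)
      have hvn : ∀ u, H.Adj v u → γ ≠ c u := by
        intro u hu
        rcases hxy u hu with rfl | rfl <;> assumption
      refine ⟨Function.update c v γ, fun u w h => ?_⟩
      have hne := h.ne
      by_cases huv : u = v
      · subst huv
        simpa [Function.update_of_ne hne.symm] using hvn w h
      · by_cases hwv : w = v
        · subst hwv
          simpa [Function.update_of_ne hne] using (hvn u h.symm).symm
        · simpa [Function.update_of_ne huv, Function.update_of_ne hwv] using
            hc u w ⟨h, huv, hwv⟩
    by_cases hne : ∃ u w, H.Adj u w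
    swap
    · exact ⟨fun _ => 0, fun u w h => absurd ⟨u, w, h⟩ hne⟩
    have hlow' : ∀ v w x y, H.Adj v w → ∃ u, H.Adj v u ∧ u ≠ x ∧ u ≠ y := by
      intro v w x y h
      by_contra! hcon
      exact hlow ⟨v, hHS v w h, x, y, fun u hu => by
        by_cases hux : u = x
        · exact Or.inl hux
        · exact Or.inr (hcon u hu hux)⟩
    have hthree : ∀ v x y, H.Adj v x → H.Adj v y → x ≠ y → ∃ z, z ≠ x ∧ z ≠ y ∧ H.Adj v z ∧
        ∀ u, H.Adj v u → u = x ∨ u = y ∨ u = z := by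
      intro v x y hx hy hxy
      obtain ⟨z, hz, h1, h2⟩ := hlow' v x x y hx
      refine ⟨z, h1, h2, hz, ?_⟩
      rcases hT v with ⟨x', y', h'⟩ | ⟨x', y', z', -, -, -, -, h'⟩
      · obtain ⟨u, hu, hu1, hu2⟩ := hlow' v x x' y' hx
        exact absurd (h' u hu) (by tauto)
      · have := h' x hx
        have := h' y hy
        have := h' z hz
        intro u hu
        have := h' u hu
        grind
    have htri : ∀ v w, H.Adj v w → ∃ x y, H.Adj v x ∧ H.Adj v y ∧ H.Adj x y := by
      intro v w h
      rcases hT v with ⟨x', y', h'⟩ | ⟨x', y', z', h1, h2, -, h3, h'⟩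
      · obtain ⟨u, hu, hu1, hu2⟩ := hlow' v w x' y' h
        exact absurd (h' u hu) (by tauto)
      · exact ⟨x', y', h1, h2, h3⟩
    by_cases hdia : ∃ a b c d, a ≠ b ∧ H.Adj c d ∧ H.Adj a c ∧ H.Adj a d ∧ H.Adj b c ∧ H.Adj b d
    · obtain ⟨a, b, x, y, hab, hxy, hax, hay, hbx, hby⟩ := hdia
      have hnab : ¬ H.Adj a b := fun h => hK a b x y h hax hay hbx hby hxy
      obtain ⟨a', ha1, ha2, ha3, ha⟩ := hthree a x y hax hay hxy.ne
      obtain ⟨b', hb1, hb2, hb3, hb⟩ := hthree b x y hbx hby hxy.ne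
      obtain ⟨x', hx1, hx2, hx3, hx⟩ := hthree x a b hax.symm hbx.symm hab
      obtain ⟨y', hy1, hy2, hy3, hy⟩ := hthree y a b hay.symm hby.symm hab
      obtain ⟨c, hc⟩ := ih (isolate H {a, b, x, y}) (S.erase a)
        (by rw [Finset.card_erase_of_mem (hHS _ _ hax)]; omega)
        (fun u w h => Finset.mem_erase.2 ⟨fun h' => h.2.1 (by simp [h']), hHS u w h.1⟩)
        (subcubicTriangled_isolate hT _) (noK4_isolate hK _)
      obtain ⟨α, h1, h2⟩ := exists_fin_three_ne (c a') (c b')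
      obtain ⟨p, q, hpq, hp, hq⟩ := exists_fin_three_compl α
      have hx' : x' = y := by have := hx y hxy; have := hay.ne; have := hby.ne; grind
      have hy' : y' = x := by have := hy x hxy.symm; have := hax.ne; have := hbx.ne; grind
      subst hx' hy'
      have hbn : ∀ v w, H.Adj v w → v ∈ ({a, b, y', x'} : Set V) →
          (if v = a ∨ v = b then α else if v = y' then p else if v = x' then q else c v) ≠
          (if w = a ∨ w = b then α else if w = y' then p else if w = x' then q else c w) := by
        intro v w h hv
        have := hax.ne; have := hay.ne; have := hbx.ne; have := hby.ne
        simp only [Set.mem_insert_iff, Set.mem_singleton_iff] at hv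
        have hne := h.ne
        have := h.symm
        rcases hv with rfl | rfl | rfl | rfl
        · have := ha w h; grind
        · have := hb w h; grind
        · have := hx w h; grind
        · have := hy w h; grind
      refine ⟨fun v => if v = a ∨ v = b then α else if v = y' then p else
        if v = x' then q else c v, fun u w h => ?_⟩
      by_cases hu : u ∈ ({a, b, y', x'} : Set V)
      · exact hbn u w h hu
      by_cases hw : w ∈ ({a, b, y', x'} : Set V)
      · exact (hbn w u h.symm hw).symm
      have := hc u w ⟨h, hu, hw⟩
      simp only [Set.mem_insert_iff, Set.mem_singleton_iff] at hu hw
      grind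
    · have hdia' : ∀ a b c d, H.Adj c d → H.Adj a c → H.Adj a d → H.Adj b c → H.Adj b d → a = b := by
        intro a b c d h1 h2 h3 h4 h5
        by_contra hab
        exact hdia ⟨a, b, c, d, hab, h1, h2, h3, h4, h5⟩
      obtain ⟨v, w, hvw⟩ := hne
      obtain ⟨x, y, hvx, hvy, hxy⟩ := htri v w hvw
      obtain ⟨v', hv1, hv2, hv3, hv⟩ := hthree v x y hvx hvy hxy.ne
      obtain ⟨x', hx1, hx2, hx3, hx⟩ := hthree x v y hvx.symm hxy hvy.ne
      obtain ⟨y', hy1, hy2, hy3, hy⟩ := hthree y v x hvy.symm hxy.symm hvx.ne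
      have hvx' : v' ≠ x' := by
        rintro rfl
        exact hv2 (hdia' _ _ _ _ hvx hv3.symm hx3.symm hvy.symm hxy.symm)
      have hvy' : v' ≠ y' := by
        rintro rfl
        exact hv1 (hdia' _ _ _ _ hvy hv3.symm hy3.symm hvx.symm hxy)
      have hxy' : x' ≠ y' := by
        rintro rfl
        exact hx1 (hdia' _ _ _ _ hxy hx3.symm hy3.symm hvx hvy)
      have hvv' := hv3.ne
      have hxx' := hx3.ne
      have hyy' := hy3.ne
      have nvx := hvx.ne
      have nvy := hvy.ne
      have nxy := hxy.ne
      set D : Set V := {v, x, y} with hD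
      have hmemD : ∀ u, u ∈ D ↔ u = v ∨ u = x ∨ u = y := fun u => by simp [hD]
      set H' := isolateAddEdge H D v' x' hvx' with hH'
      have hout : ∀ t t', t ∈ D → t' ∉ D → H.Adj t t' → (∀ u, H.Adj t u → u ∈ D ∨ u = t') →
          (∀ u, H.Adj t' u → u ∈ D → u = t) →
          ∃ p q, p ∉ D ∧ q ∉ D ∧ H.Adj t' p ∧ H.Adj t' q ∧ H.Adj p q ∧
            ∀ u, H.Adj t' u → u ∉ D → u = p ∨ u = q := by
        intro t t' ht ht' h hut hu
        obtain ⟨p, q, hp, hq, hpq⟩ := htri t' t h.symm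
        have hpt : p ≠ t := by
          rintro rfl
          rcases hut q hpq with h' | h'
          · exact hpq.ne (hu q hq h').symm
          · exact hq.ne h'.symm
        have hqt : q ≠ t := by
          rintro rfl
          rcases hut p hpq.symm with h' | h'
          · exact hpq.ne (hu p hp h')
          · exact hp.ne h'.symm
        obtain ⟨z, -, -, hz, hz'⟩ := hthree t' p q hp hq hpq.ne
        refine ⟨p, q, fun hp' => hpt (hu p hp hp'), fun hq' => hqt (hu q hq hq'), hp, hq, hpq, ?_⟩
        intro u hu1 hu2
        have := hz' t h.symm
        have := hz' u hu1
        grind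
      have hDv : ∀ u, H.Adj v u → u ∈ D ∨ u = v' := fun u hu => by
        have := hv u hu; rw [hmemD]; tauto
      have hDx : ∀ u, H.Adj x u → u ∈ D ∨ u = x' := fun u hu => by
        have := hx u hu; rw [hmemD]; tauto
      have hDy : ∀ u, H.Adj y u → u ∈ D ∨ u = y' := fun u hu => by
        have := hy u hu; rw [hmemD]; tauto
      have hv'D : v' ∉ D := by rw [hmemD]; grind
      have hx'D : x' ∉ D := by rw [hmemD]; grind
      have hy'D : y' ∉ D := by rw [hmemD]; grind
      have hback : ∀ u t, u ∉ D → t ∈ D → H.Adj u t →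
          (t = v ∧ u = v') ∨ (t = x ∧ u = x') ∨ (t = y ∧ u = y') := by
        intro u t hu ht h
        rw [hmemD] at ht
        rcases ht with rfl | rfl | rfl
        · exact Or.inl ⟨rfl, (hDv u h.symm).resolve_left hu⟩
        · exact Or.inr (Or.inl ⟨rfl, (hDx u h.symm).resolve_left hu⟩)
        · exact Or.inr (Or.inr ⟨rfl, (hDy u h.symm).resolve_left hu⟩)
      obtain ⟨pv, qv, hpv, hqv, hpv', hqv', hpqv, hNv⟩ := hout v v' (by simp [hD]) hv'D hv3 hDv
        (fun u hu hu' => by have := hback v' u hv'D hu' hu; grind)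
      obtain ⟨px, qx, hpx, hqx, hpx', hqx', hpqx, hNx⟩ := hout x x' (by simp [hD]) hx'D hx3 hDx
        (fun u hu hu' => by have := hback x' u hx'D hu' hu; grind)
      obtain ⟨py, qy, hpy, hqy, hpy', hqy', hpqy, hNy⟩ := hout y y' (by simp [hD]) hy'D hy3 hDy
        (fun u hu hu' => by have := hback y' u hy'D hu' hu; grind)
      have hT' : SubcubicTriangled H' := by
        intro u
        by_cases huv : u = v'
        · subst huv
          refine Or.inr ⟨pv, qv, x', Or.inl ⟨hpv', hv'D, hpv⟩, Or.inl ⟨hqv', hv'D, hqv⟩,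
            Or.inr (Or.inl ⟨rfl, rfl⟩), Or.inl ⟨hpqv, hpv, hqv⟩, ?_⟩
          rintro t (h | h | h)
          · have := hNv t h.1 h.2.2; tauto
          · exact Or.inr (Or.inr h.2)
          · exact absurd h.1 hvx'
        by_cases hux : u = x'
        · subst hux
          refine Or.inr ⟨px, qx, v', Or.inl ⟨hpx', hx'D, hpx⟩, Or.inl ⟨hqx', hx'D, hqx⟩,
            Or.inr (Or.inr ⟨rfl, rfl⟩), Or.inl ⟨hpqx, hpx, hqx⟩, ?_⟩
          rintro t (h | h | h)
          · have := hNx t h.1 h.2.2; tauto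
          · exact absurd h.1.symm hvx'
          · exact Or.inr (Or.inr h.2)
        have hold : ∀ t, H'.Adj u t → H.Adj u t ∧ u ∉ D ∧ t ∉ D := by
          rintro t (h | h | h)
          · exact h
          · exact absurd h.1 huv
          · exact absurd h.1 hux
        by_cases huy : u = y'
        · subst huy
          exact Or.inl ⟨py, qy, fun t ht => hNy t (hold t ht).1 (hold t ht).2.2⟩
        by_cases huD : u ∈ D
        · exact Or.inl ⟨u, u, fun t ht => absurd huD (hold t ht).2.1⟩
        have hnD : ∀ t, H.Adj u t → t ∉ D := fun t ht htD => by
          have := hback u t huD htD ht; tauto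
        rcases hT u with ⟨a, b, h⟩ | ⟨a, b, d, ha, hb, hd, hab, h⟩
        · exact Or.inl ⟨a, b, fun t ht => h t (hold t ht).1⟩
        · exact Or.inr ⟨a, b, d, Or.inl ⟨ha, huD, hnD a ha⟩, Or.inl ⟨hb, huD, hnD b hb⟩,
            Or.inl ⟨hd, huD, hnD d hd⟩, Or.inl ⟨hab, hnD a ha, hnD b hb⟩,
            fun t ht => h t (hold t ht).1⟩
      have hK' : NoK4 H' := by
        refine noK4_isolateAddEdge hK D hvx' fun p q h1 h2 h3 h4 h5 => ?_
        exact hvx' (hdia' _ _ _ _ h1 h2 h3 h4 h5)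
      have hS' : ∀ u w, H'.Adj u w → u ∈ S.erase v := by
        rintro u w (h | h | h)
        · exact Finset.mem_erase.2 ⟨fun h' => h.2.1 (by simp [hD, h']), hHS u w h.1⟩
        · rw [h.1]
          exact Finset.mem_erase.2 ⟨hvv'.symm, hHS _ _ hv3.symm⟩
        · rw [h.1]
          exact Finset.mem_erase.2 ⟨hx1, hHS _ _ hx3.symm⟩
      obtain ⟨c, hc⟩ := ih H' (S.erase v)
        (by rw [Finset.card_erase_of_mem (hHS _ _ hvw)]; omega) hS' hT' hK'
      obtain ⟨p, q, r, hpq, hpr, hqr, hp, hq, hr⟩ := exists_fin_three_rainbow (c v') (c x') (c y')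
        (hc v' x' (Or.inr (Or.inl ⟨rfl, rfl⟩)))
      have hbn : ∀ u w, H.Adj u w → u ∈ D →
          (if u = v then p else if u = x then q else if u = y then r else c u) ≠
          (if w = v then p else if w = x then q else if w = y then r else c w) := by
        intro u w h hu
        rw [hmemD] at hu
        rcases hu with rfl | rfl | rfl
        · have := hv w h; grind
        · have := hx w h; grind
        · have := hy w h; grind
      refine ⟨fun u => if u = v then p else if u = x then q else if u = y then r else c u,
        fun u w h => ?_⟩
      by_cases hu : u ∈ D
      · exact hbn u w h hu
      by_cases hw : w ∈ D
      · exact (hbn w u h.symm hw).symm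
      have := hc u w (Or.inl ⟨h, hu, hw⟩)
      rw [hmemD] at hu hw
      grind

/-- `IsThread G p m`: the vertices `p 0, …, p (m + 1)` start at a vertex of degree 3 and follow
without backtracking the `m` vertices `p 1, …, p m` of degree 2. -/
structure IsThread {V : Type*} (G : SimpleGraph V) (p : ℕ → V) (m : ℕ) : Prop where
  start : (G.neighborSet (p 0)).ncard = 3
  first : G.Adj (p 0) (p 1)
  nbrs : ∀ i < m, G.neighborSet (p (i + 1)) = {p i, p (i + 2)}
  ne : ∀ i < m, p i ≠ p (i + 2)

namespace IsThread

variable {V : Type*} {G : SimpleGraph V} {p q : ℕ → V} {m n : ℕ}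

theorem adj_iff (h : IsThread G p m) {i : ℕ} (hi : i < m) (u : V) :
    G.Adj (p (i + 1)) u ↔ u = p i ∨ u = p (i + 2) := by
  rw [← mem_neighborSet, h.nbrs i hi]; simp

theorem adj (h : IsThread G p m) {i : ℕ} (hi : i ≤ m) : G.Adj (p i) (p (i + 1)) := by
  rcases i with _ | i
  · exact h.first
  · exact (h.adj_iff hi _).2 (Or.inr rfl)

theorem ncard_eq_two (h : IsThread G p m) {i : ℕ} (hi : i < m) :
    (G.neighborSet (p (i + 1))).ncard = 2 := by
  rw [h.nbrs i hi, Set.ncard_pair (h.ne i hi)]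

theorem ne_of_lt (h : IsThread G p m) (j : ℕ) : ∀ i, i < j → j ≤ m → p i ≠ p j := by
  induction j using Nat.strong_induction_on with
  | _ j ih =>
    intro i hij hj heq
    rcases i with _ | i
    · obtain ⟨j, rfl⟩ : ∃ k, j = k + 1 := ⟨j - 1, by omega⟩
      have h1 := h.ncard_eq_two (i := j) (by omega)
      rw [← heq, h.start] at h1
      omega
    · obtain ⟨j, rfl⟩ : ∃ k, j = k + 1 := ⟨j - 1, by omega⟩
      have hadj := h.adj (i := j) (by omega)
      rw [← heq] at hadj
      rcases (h.adj_iff (i := i) (by omega) _).1 hadj.symm with h1 | h1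
      · exact ih j (by omega) i (by omega) (by omega) h1.symm
      · rcases lt_trichotomy (i + 2) j with h2 | h2 | h2
        · exact ih j (by omega) (i + 2) h2 (by omega) h1.symm
        · subst h2
          exact h.ne (i + 1) (by omega) heq
        · obtain rfl : j = i + 1 := by omega
          exact (h.adj (i := i + 1) (by omega)).ne h1

theorem ne_last (h : IsThread G p m) (hend : (G.neighborSet (p (m + 1))).ncard ≠ 2)
    {i : ℕ} (hi : i < m) : p (i + 1) ≠ p (m + 1) := by
  intro heq
  exact hend (heq ▸ h.ncard_eq_two hi)

theorem injOn (h : IsThread G p m) (hend : (G.neighborSet (p (m + 1))).ncard ≠ 2)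
    (hne : p 0 ≠ p (m + 1)) {i j : ℕ} (hi : i ≤ m + 1) (hj : j ≤ m + 1) (heq : p i = p j) :
    i = j := by
  have key : ∀ i j, i < j → j ≤ m + 1 → p i ≠ p j := by
    intro i j hij hj
    rcases Nat.lt_or_ge m j with h1 | h1
    · obtain rfl : j = m + 1 := by omega
      rcases i with _ | i
      · exact hne
      · exact h.ne_last hend (by omega)
    · exact h.ne_of_lt j i hij h1
  rcases lt_trichotomy i j with h1 | h1 | h1
  · exact absurd heq (key i j h1 hj)
  · exact h1
  · exact absurd heq.symm (key j i h1 hi)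

theorem reverse (h : IsThread G p m) (hend : (G.neighborSet (p (m + 1))).ncard = 3) :
    IsThread G (fun i => p (m + 1 - i)) m where
  start := by simpa using hend
  first := by simpa using (h.adj le_rfl).symm
  nbrs i hi := by
    have e1 : m + 1 - (i + 1) = (m - i - 1) + 1 := by omega
    have e2 : m + 1 - i = (m - i - 1) + 2 := by omega
    have e3 : m + 1 - (i + 2) = m - i - 1 := by omega
    simp only [e1, e2, e3]
    rw [h.nbrs _ (by omega), Set.pair_comm]
  ne i hi := by
    have e2 : m + 1 - i = (m - i - 1) + 2 := by omega
    have e3 : m + 1 - (i + 2) = m - i - 1 := by omega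
    simp only [e2, e3]
    exact (h.ne _ (by omega)).symm

theorem agree (hp : IsThread G p m) (hq : IsThread G q n) (h0 : p 0 = q 0) (h1 : p 1 = q 1)
    (i : ℕ) : i ≤ m → i ≤ n → p i = q i ∧ p (i + 1) = q (i + 1) := by
  induction i with
  | zero => exact fun _ _ => ⟨h0, h1⟩
  | succ i ih =>
    intro hm hn
    obtain ⟨e1, e2⟩ := ih (by omega) (by omega)
    refine ⟨e2, ?_⟩
    have h := hp.adj hm
    rw [e2] at h
    rcases (hq.adj_iff hn _).1 h with h' | h'
    · exact absurd (e1.trans h'.symm) (hp.ne i hm)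
    · exact h'

theorem end_unique (hp : IsThread G p m) (hq : IsThread G q n) (h0 : p 0 = q 0) (h1 : p 1 = q 1)
    (hpe : (G.neighborSet (p (m + 1))).ncard ≠ 2) (hqe : (G.neighborSet (q (n + 1))).ncard ≠ 2) :
    p (m + 1) = q (n + 1) := by
  rcases lt_trichotomy m n with h | h | h
  · have := (hp.agree hq h0 h1 m le_rfl h.le).2
    rw [this] at hpe
    exact absurd (hq.ncard_eq_two h) hpe
  · subst h
    exact (hp.agree hq h0 h1 m le_rfl le_rfl).2
  · have := (hp.agree hq h0 h1 n h.le le_rfl).2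
    rw [← this] at hqe
    exact absurd (hp.ncard_eq_two h) hqe

end IsThread

/-- Following degree-2 vertices from a degree-3 vertex, one reaches a vertex of another degree. -/
theorem exists_isThread {V : Type*} [Fintype V] {G : SimpleGraph V} {s x : V}
    (hs : (G.neighborSet s).ncard = 3) (hsx : G.Adj s x) :
    ∃ p m, IsThread G p m ∧ p 0 = s ∧ p 1 = x ∧ (G.neighborSet (p (m + 1))).ncard ≠ 2 := by
  classical
  have hstep : ∀ a b, ∃ d, G.Adj a b → (G.neighborSet b).ncard = 2 →
      G.neighborSet b = {a, d} ∧ a ≠ d := by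
    intro a b
    by_cases hab : G.Adj a b ∧ (G.neighborSet b).ncard = 2
    · obtain ⟨u, w, huw, hN⟩ := Set.ncard_eq_two.1 hab.2
      have ha : a ∈ G.neighborSet b := hab.1.symm
      rw [hN] at ha
      rcases ha with rfl | rfl
      · exact ⟨w, fun _ _ => ⟨hN, huw⟩⟩
      · exact ⟨u, fun _ _ => ⟨by rw [hN, Set.pair_comm], huw.symm⟩⟩
    · exact ⟨a, fun h1 h2 => absurd ⟨h1, h2⟩ hab⟩
  choose next hnext using hstep
  let f : ℕ → V × V := fun n => n.rec (s, x) fun _ ab => (ab.2, next ab.1 ab.2)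
  let p : ℕ → V := fun n => (f n).1
  have hp2 : ∀ n, p (n + 2) = next (p n) (p (n + 1)) := fun n => rfl
  have hthread : ∀ m, (∀ i < m, (G.neighborSet (p (i + 1))).ncard = 2) → IsThread G p m := by
    intro m hm
    have hadj : ∀ i ≤ m, G.Adj (p i) (p (i + 1)) := by
      intro i
      induction i with
      | zero => exact fun _ => hsx
      | succ i ih =>
        intro hi
        have h1 := (hnext _ _ (ih (by omega)) (hm i hi)).1
        rw [← mem_neighborSet, h1, ← hp2]
        simp
    exact ⟨hs, hsx, fun i hi => (hnext _ _ (hadj i hi.le) (hm i hi)).1,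
      fun i hi => (hnext _ _ (hadj i hi.le) (hm i hi)).2⟩
  have hex : ∃ m, (G.neighborSet (p (m + 1))).ncard ≠ 2 := by
    by_contra! hcon
    obtain ⟨i, j, hij, heq⟩ := Finite.exists_ne_map_eq_of_infinite p
    rcases lt_or_gt_of_ne hij with h | h
    · exact (hthread j fun k _ => hcon k).ne_of_lt j i h le_rfl heq
    · exact (hthread i fun k _ => hcon k).ne_of_lt i j h le_rfl heq.symm
  refine ⟨p, Nat.find hex, hthread _ fun i hi => ?_, rfl, rfl, Nat.find_spec hex⟩
  simpa using Nat.find_min hex hi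

theorem IsThread.mod_ne_two {V : Type*} {G : SimpleGraph V} {p : ℕ → V} {m : ℕ}
    (hA : ∀ j : ℕ, 0 < j → ¬ HasAPath G (3 * j + 1)) (h : IsThread G p m)
    (hend : (G.neighborSet (p (m + 1))).ncard = 3) (hne : p 0 ≠ p (m + 1)) : m % 3 ≠ 2 := by
  intro hm
  obtain ⟨k, rfl⟩ : ∃ k, m = 3 * k + 2 := ⟨m / 3, by omega⟩
  refine hA (k + 1) (by omega) ⟨p, ?_, ?_, ?_, h.start, hend⟩
  · exact fun a b ha hb => h.injOn (by omega) hne (by omega) (by omega)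
  · exact fun a ha => h.adj (by omega)
  · intro a h0 ha
    obtain ⟨a, rfl⟩ : ∃ b, a = b + 1 := ⟨a - 1, by omega⟩
    exact h.ncard_eq_two (by omega)

/-- Two distinct degree-3 vertices are adjacent in `threadGraph G` when a thread joins them. -/
def threadGraph {V : Type*} (G : SimpleGraph V) : SimpleGraph V where
  Adj u v := u ≠ v ∧ ∃ p m, IsThread G p m ∧ p 0 = u ∧ p (m + 1) = v ∧
    (G.neighborSet v).ncard = 3
  symm := ⟨by
    rintro u v ⟨hne, p, m, hp, rfl, rfl, hv⟩
    exact ⟨hne.symm, _, m, hp.reverse hv, by simp, by simp, hp.start⟩⟩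
  loopless := ⟨fun _ h => h.1 rfl⟩

theorem threadGraph_adj_of_adj {V : Type*} {G : SimpleGraph V} {u v : V} (h : G.Adj u v)
    (hu : (G.neighborSet u).ncard = 3) (hv : (G.neighborSet v).ncard = 3) :
    (threadGraph G).Adj u v :=
  ⟨h.ne, fun i => if i = 0 then u else v, 0,
    ⟨by simpa using hu, by simpa using h, fun i hi => by omega, fun i hi => by omega⟩,
    by simp, by simp, hv⟩

theorem ClawFree.exists_adj_of_ncard_eq_three {V : Type*} {G : SimpleGraph V} (hclaw : ClawFree G)
    {u : V} (hu : (G.neighborSet u).ncard = 3) :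
    ∃ x y z, x ≠ z ∧ y ≠ z ∧ G.neighborSet u = {x, y, z} ∧ G.Adj x y := by
  obtain ⟨x, y, z, hxy, hxz, hyz, hN⟩ := Set.ncard_eq_three.1 hu
  have hx : G.Adj u x := by rw [← mem_neighborSet, hN]; simp
  have hy : G.Adj u y := by rw [← mem_neighborSet, hN]; simp
  have hz : G.Adj u z := by rw [← mem_neighborSet, hN]; simp
  by_cases h1 : G.Adj x y
  · exact ⟨x, y, z, hxz, hyz, hN, h1⟩
  by_cases h2 : G.Adj x z
  · exact ⟨x, z, y, hxy, hyz.symm, by rw [hN, Set.pair_comm y z], h2⟩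
  by_cases h3 : G.Adj y z
  · exact ⟨y, z, x, hxy.symm, hxz.symm, by
      rw [hN, Set.insert_comm, Set.pair_comm x z], h3⟩
  exact absurd ⟨u, x, y, z, hxy, hxz, hyz, hx, hy, hz, h1, h2, h3⟩ hclaw

/-- All `threadGraph` edges at `u` starting with the edge `ux` have the same other end. -/
theorem exists_end {V : Type*} {G : SimpleGraph V} (u x : V) :
    ∃ e, ∀ p m, IsThread G p m → p 0 = u → p 1 = x →
      (G.neighborSet (p (m + 1))).ncard = 3 → p (m + 1) = e := by
  by_cases h : ∃ p m, IsThread G p m ∧ p 0 = u ∧ p 1 = x ∧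
      (G.neighborSet (p (m + 1))).ncard = 3
  · obtain ⟨q, n, hq, h0, h1, h3⟩ := h
    exact ⟨q (n + 1), fun p m hp hp0 hp1 hp3 => hp.end_unique hq (hp0.trans h0.symm)
      (hp1.trans h1.symm) (by omega) (by omega)⟩
  · exact ⟨u, fun p m hp hp0 hp1 hp3 => absurd ⟨p, m, hp, hp0, hp1, hp3⟩ h⟩

theorem threadGraph_local {V : Type*} {G : SimpleGraph V} (hclaw : ClawFree G) (u : V) :
    (∃ x y, ∀ w, (threadGraph G).Adj u w → w = x ∨ w = y) ∨
    ∃ x y e, G.Adj u x ∧ G.Adj u y ∧ G.Adj x y ∧ (G.neighborSet u).ncard = 3 ∧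
      (G.neighborSet x).ncard = 3 ∧ (G.neighborSet y).ncard = 3 ∧
      ∀ w, (threadGraph G).Adj u w → w = x ∨ w = y ∨ w = e := by
  by_cases hu : (G.neighborSet u).ncard = 3
  swap
  · refine Or.inl ⟨u, u, ?_⟩
    rintro w ⟨-, p, m, hp, rfl, -, -⟩
    exact absurd hp.start hu
  obtain ⟨x, y, z, hxz, hyz, hN, hxy⟩ := hclaw.exists_adj_of_ncard_eq_three hu
  have hadj : ∀ w, G.Adj u w ↔ w = x ∨ w = y ∨ w = z := fun w => by
    rw [← mem_neighborSet, hN]; simp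
  have hux := (hadj x).2 (Or.inl rfl)
  have huy := (hadj y).2 (Or.inr (Or.inl rfl))
  obtain ⟨e, he⟩ := exists_end (G := G) u z
  -- threads starting with an edge to a vertex of degree 3
  have hthree : ∀ p m, IsThread G p m → (G.neighborSet (p 1)).ncard = 3 → p (m + 1) = p 1 := by
    intro p m hp h3
    rcases m with _ | m
    · rfl
    · have := hp.ncard_eq_two (i := 0) (by omega)
      simp only [zero_add] at this
      omega
  -- threads starting through a vertex of degree 2 of the triangle
  have htwo : ∀ x y, G.Adj u x → G.Adj u y → G.Adj x y → (G.neighborSet x).ncard ≠ 3 →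
      ∀ p m, IsThread G p m → p 0 = u → p 1 = x → u ≠ p (m + 1) →
      (G.neighborSet (p (m + 1))).ncard = 3 → p (m + 1) = y := by
    rintro x y hux huy hxy hx p m hp rfl rfl hne h3
    rcases m with _ | m
    · exact absurd h3 hx
    have hy : y = p 2 := ((hp.adj_iff (i := 0) (by omega) y).1 hxy).resolve_left huy.ne'
    rcases m with _ | m
    · exact hy.symm
    exfalso
    rw [hy] at huy
    have h1 : p 0 = p 3 := ((hp.adj_iff (i := 1) (by omega) (p 0)).1 huy.symm).resolve_left
      hux.ne
    rcases m with _ | m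
    · exact hne h1
    · exact hp.ne_of_lt 3 0 (by omega) (by omega) h1
  by_cases hx : (G.neighborSet x).ncard = 3
  · by_cases hy : (G.neighborSet y).ncard = 3
    · refine Or.inr ⟨x, y, e, hux, huy, hxy, hu, hx, hy, ?_⟩
      rintro w ⟨hne, p, m, hp, rfl, rfl, hw⟩
      rcases (hadj (p 1)).1 hp.first with h | h | h
      · exact Or.inl ((hthree p m hp (h ▸ hx)).trans h)
      · exact Or.inr (Or.inl ((hthree p m hp (h ▸ hy)).trans h))
      · exact Or.inr (Or.inr (he p m hp rfl h hw))
    · refine Or.inl ⟨x, e, ?_⟩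
      rintro w ⟨hne, p, m, hp, rfl, rfl, hw⟩
      rcases (hadj (p 1)).1 hp.first with h | h | h
      · exact Or.inl ((hthree p m hp (h ▸ hx)).trans h)
      · exact Or.inl (htwo y x huy hux hxy.symm hy p m hp rfl h hne hw)
      · exact Or.inr (he p m hp rfl h hw)
  · refine Or.inl ⟨y, e, ?_⟩
    rintro w ⟨hne, p, m, hp, rfl, rfl, hw⟩
    rcases (hadj (p 1)).1 hp.first with h | h | h
    · exact Or.inl (htwo x y hux huy hxy hx p m hp rfl h hne hw)
    · by_cases hy : (G.neighborSet y).ncard = 3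
      · exact Or.inl ((hthree p m hp (h ▸ hy)).trans h)
      · exact absurd (htwo y x huy hux hxy.symm hy p m hp rfl h hne hw ▸ hw) hx
    · exact Or.inr (he p m hp rfl h hw)

theorem threadGraph_subcubicTriangled {V : Type*} {G : SimpleGraph V}
    (hclaw : ClawFree G) : SubcubicTriangled (threadGraph G) := by
  intro u
  rcases threadGraph_local hclaw u with h | ⟨x, y, e, hux, huy, hxy, hu, hx, hy, h⟩
  · exact Or.inl h
  by_cases he : (threadGraph G).Adj u e
  · exact Or.inr ⟨x, y, e, threadGraph_adj_of_adj hux hu hx, threadGraph_adj_of_adj huy hu hy, he,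
      threadGraph_adj_of_adj hxy hx hy, h⟩
  · refine Or.inl ⟨x, y, fun w hw => ?_⟩
    rcases h w hw with h | h | rfl
    · exact Or.inl h
    · exact Or.inr h
    · exact absurd hw he

theorem isThread_loop_length {V : Type*} {G : SimpleGraph V} (hclaw : ClawFree G) {p : ℕ → V}
    {m : ℕ} (h : IsThread G p m) (hloop : p 0 = p (m + 1)) : m = 2 := by
  have hm0 : m ≠ 0 := by
    rintro rfl
    exact h.first.ne hloop
  have hm1 : m ≠ 1 := by
    rintro rfl
    exact h.ne 0 (by omega) hloop
  by_contra hm2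
  obtain ⟨k, rfl⟩ : ∃ k, m = k + 3 := ⟨m - 3, by omega⟩
  have hlast : G.Adj (p 0) (p (k + 3)) := hloop ▸ (h.adj (i := k + 3) le_rfl).symm
  have hne : p 1 ≠ p (k + 3) := h.ne_of_lt _ _ (by omega) le_rfl
  have h02 : ¬ G.Adj (p 0) (p 2) := by
    intro hadj
    rcases (h.adj_iff (i := 1) (by omega) _).1 hadj.symm with h1 | h1
    · exact h.first.ne h1
    · exact h.ne_of_lt 3 0 (by omega) (by omega) h1
  have h0k : ¬ G.Adj (p 0) (p (k + 2)) := by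
    intro hadj
    rcases (h.adj_iff (i := k + 1) (by omega) _).1 hadj.symm with h1 | h1
    · exact h.ne_of_lt (k + 1) 0 (by omega) (by omega) h1
    · exact h.ne_of_lt (k + 3) 0 (by omega) le_rfl h1
  have hfirst : ∀ u, G.Adj (p 0) u → ¬ G.Adj (p 1) u := by
    intro u hu h1
    rcases (h.adj_iff (i := 0) (by omega) _).1 h1 with rfl | rfl
    · exact hu.ne rfl
    · exact h02 hu
  have hlast' : ∀ u, G.Adj (p 0) u → ¬ G.Adj (p (k + 3)) u := by
    intro u hu h1
    rcases (h.adj_iff (i := k + 2) (by omega) _).1 h1 with rfl | rfl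
    · exact h0k hu
    · exact hu.ne hloop
  obtain ⟨z, hz⟩ : ∃ z, z ∈ G.neighborSet (p 0) ∧ z ≠ p 1 ∧ z ≠ p (k + 3) := by
    obtain ⟨z, hz, hz'⟩ := Set.exists_mem_notMem_of_ncard_lt_ncard
      (s := {p 1, p (k + 3)}) (t := G.neighborSet (p 0)) (by
        rw [h.start, Set.ncard_pair hne]; omega)
    simp only [Set.mem_insert_iff, Set.mem_singleton_iff, not_or] at hz'
    exact ⟨z, hz, hz'⟩
  exact hclaw ⟨p 0, p 1, p (k + 3), z, hne, hz.2.1.symm, hz.2.2.symm, h.first, hlast, hz.1,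
    hfirst _ hlast, hfirst z hz.1, hlast' z hz.1⟩

theorem exists_step (m : ℕ) (a b : ZMod 3) (hm : m % 3 ≠ 2) (hab : a ≠ b) :
    ∃ ε : ZMod 3, ε ≠ 0 ∧ a + ((m + 1 : ℕ) : ZMod 3) * ε = b := by
  have h : ((m + 1 : ℕ) : ZMod 3) ≠ 0 := by
    rw [Ne, ZMod.natCast_eq_zero_iff]
    omega
  revert h
  generalize ((m + 1 : ℕ) : ZMod 3) = t
  revert a b t
  decide

theorem zmod_three_ne_add {ε : ZMod 3} (hε : ε ≠ 0) (a : ZMod 3) (i : ℕ) :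
    a + (i : ZMod 3) * ε ≠ a + ((i + 1 : ℕ) : ZMod 3) * ε ∧
    a + (i : ZMod 3) * ε ≠ a + ((i + 2 : ℕ) : ZMod 3) * ε := by
  push_cast
  generalize (i : ZMod 3) = t
  revert ε a t
  decide

/-- A partial coloring, closed under taking neighbors of vertices of degree at most 2, that
extends `c₀` from the vertices of degree 3 and is rainbow around the others. -/
structure IsPartialColoring {V : Type*} (G : SimpleGraph V) (c₀ : V → ZMod 3) (S : Set V)
    (c : V → ZMod 3) : Prop where
  mem : ∀ v, (G.neighborSet v).ncard = 3 → v ∈ S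
  eq : ∀ v, (G.neighborSet v).ncard = 3 → c v = c₀ v
  closed : ∀ v ∈ S, (G.neighborSet v).ncard ≠ 3 → ∀ u, G.Adj v u → u ∈ S
  proper : ∀ v ∈ S, (G.neighborSet v).ncard ≠ 3 → ∀ u, G.Adj v u → c v ≠ c u
  rainbow : ∀ v ∈ S, (G.neighborSet v).ncard ≠ 3 → ∀ u w, G.Adj v u → G.Adj v w → u ≠ w → c u ≠ c w

theorem IsPartialColoring.extend {V : Type*} [Fintype V] {G : SimpleGraph V}
    (hclaw : ClawFree G) (hmax : ∀ v : V, (G.neighborSet v).ncard ≤ 3)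
    (hA : ∀ j : ℕ, 0 < j → ¬ HasAPath G (3 * j + 1)) {c₀ : V → ZMod 3}
    (hc₀ : ∀ u v, (threadGraph G).Adj u v → c₀ u ≠ c₀ v) {S : Set V} {c : V → ZMod 3}
    (h : IsPartialColoring G c₀ S c) {s x : V} (hs : s ∈ S) (hx : x ∉ S) (hsx : G.Adj s x) :
    ∃ (S' : Set V) (c' : V → ZMod 3), S ⊂ S' ∧ IsPartialColoring G c₀ S' c' := by
  classical
  have hs3 : (G.neighborSet s).ncard = 3 := by
    by_contra h3
    exact hx (h.closed s hs h3 x hsx)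
  obtain ⟨p, m, hp, rfl, rfl, hend⟩ := exists_isThread hs3 hsx
  have hstep : ∃ ε : ZMod 3, ε ≠ 0 ∧ ((G.neighborSet (p (m + 1))).ncard = 3 →
      c₀ (p 0) + ((m + 1 : ℕ) : ZMod 3) * ε = c₀ (p (m + 1))) := by
    by_cases h3 : (G.neighborSet (p (m + 1))).ncard = 3
    · by_cases hloop : p 0 = p (m + 1)
      · obtain rfl := isThread_loop_length hclaw hp hloop
        refine ⟨1, by decide, fun _ => ?_⟩
        rw [← hloop]
        have : ((2 + 1 : ℕ) : ZMod 3) = 0 := by decide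
        rw [this]
        simp
      · obtain ⟨ε, h1, h2⟩ := exists_step m (c₀ (p 0)) (c₀ (p (m + 1)))
          (hp.mod_ne_two hA h3 hloop) (hc₀ _ _ ⟨hloop, p, m, hp, rfl, rfl, h3⟩)
        exact ⟨ε, h1, fun _ => h2⟩
    · exact ⟨1, by decide, fun h' => absurd h' h3⟩
  obtain ⟨ε, hε, hlast⟩ := hstep
  have hnotmem : ∀ i ≤ m, (G.neighborSet (p (i + 1))).ncard ≠ 3 → p (i + 1) ∉ S := by
    intro i
    induction i with
    | zero => exact fun _ _ => hx
    | succ i ih =>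
      intro hi h3 hmem
      have := hp.ncard_eq_two (i := i) (by omega)
      exact ih (by omega) (by omega) (h.closed _ hmem h3 _ (hp.adj hi).symm)
  have hval : ∀ i ≤ m + 1, p i ∈ S → c (p i) = c₀ (p 0) + (i : ZMod 3) * ε := by
    intro i hi hmem
    rcases i with _ | i
    · simpa using h.eq _ hs3
    · have h3 : (G.neighborSet (p (i + 1))).ncard = 3 := by
        by_contra h3
        exact hnotmem i (by omega) h3 hmem
      have him : i = m := by
        by_contra him
        have := hp.ncard_eq_two (i := i) (by omega)
        omega
      subst him
      rw [h.eq _ h3, hlast h3]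
  have hinj : ∀ i ≤ m + 1, ∀ j ≤ m + 1, p i ∉ S → p i = p j → i = j := by
    have key : ∀ i j, i < j → j ≤ m + 1 → p i ∉ S → p i ≠ p j := by
      intro i j hij hj hi
      rcases i with _ | i
      · exact absurd hs hi
      rcases Nat.lt_or_ge m j with h1 | h1
      · obtain rfl : j = m + 1 := by omega
        exact hp.ne_last hend (by omega)
      · exact hp.ne_of_lt j _ hij h1
    intro i hi j hj hiS heq
    rcases lt_trichotomy i j with h1 | h1 | h1
    · exact absurd heq (key i j h1 hj hiS)
    · exact h1
    · exact absurd heq.symm (key j i h1 hi (heq ▸ hiS))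
  let c' : V → ZMod 3 := fun v =>
    if v ∈ S then c v else if hv : ∃ i, i ≤ m + 1 ∧ p i = v then c₀ (p 0) + (hv.choose : ZMod 3) * ε
    else 0
  have hc'S : ∀ v ∈ S, c' v = c v := fun v hv => if_pos hv
  have hc'p : ∀ i ≤ m + 1, c' (p i) = c₀ (p 0) + (i : ZMod 3) * ε := by
    intro i hi
    by_cases hmem : p i ∈ S
    · rw [hc'S _ hmem, hval i hi hmem]
    · have hv : ∃ j, j ≤ m + 1 ∧ p j = p i := ⟨i, hi, rfl⟩
      have hj := hinj i hi _ hv.choose_spec.1 hmem hv.choose_spec.2.symm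
      simp only [c', if_neg hmem, dif_pos hv, ← hj]
  let S' : Set V := {v | v ∈ S ∨ ∃ i ≤ m + 1, p i = v}
  have hpS' : ∀ i ≤ m + 1, p i ∈ S' := fun i hi => Or.inr ⟨i, hi, rfl⟩
  have hleaf : (G.neighborSet (p (m + 1))).ncard ≠ 3 → ∀ u, G.Adj (p (m + 1)) u → u = p m := by
    intro h3 u hu
    have hle : (G.neighborSet (p (m + 1))).ncard ≤ 1 := by
      have := hmax (p (m + 1)); omega
    exact (Set.ncard_le_one (Set.toFinite _)).1 hle u hu (p m) (hp.adj le_rfl).symm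
  have hcases : ∀ v ∈ S', (G.neighborSet v).ncard ≠ 3 →
      v ∈ S ∨ (∃ i < m, v = p (i + 1)) ∨ v = p (m + 1) := by
    rintro v (hv | ⟨i, hi, rfl⟩) h3
    · exact Or.inl hv
    · rcases i with _ | i
      · exact absurd hs3 h3
      · rcases Nat.lt_or_ge i m with h1 | h1
        · exact Or.inr (Or.inl ⟨i, h1, rfl⟩)
        · obtain rfl : i = m := by omega
          exact Or.inr (Or.inr rfl)
  refine ⟨S', c', ⟨fun v hv => Or.inl hv, fun hsub => hx (hsub (hpS' 1 (by omega)))⟩,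
    fun v hv => Or.inl (h.mem v hv), fun v hv => by rw [hc'S v (h.mem v hv), h.eq v hv], ?_, ?_, ?_⟩
  · intro v hv h3 u hu
    rcases hcases v hv h3 with hv | ⟨i, hi, rfl⟩ | rfl
    · exact Or.inl (h.closed v hv h3 u hu)
    · rcases (hp.adj_iff hi u).1 hu with rfl | rfl
      · exact hpS' _ (by omega)
      · exact hpS' _ (by omega)
    · rw [hleaf h3 u hu]
      exact hpS' _ (by omega)
  · intro v hv h3 u hu
    rcases hcases v hv h3 with hv | ⟨i, hi, rfl⟩ | rfl
    · rw [hc'S v hv, hc'S u (h.closed v hv h3 u hu)]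
      exact h.proper v hv h3 u hu
    · rcases (hp.adj_iff hi u).1 hu with rfl | rfl
      · rw [hc'p _ (by omega), hc'p _ (by omega)]
        exact (zmod_three_ne_add hε _ i).1.symm
      · rw [hc'p _ (by omega), hc'p _ (by omega)]
        exact (zmod_three_ne_add hε _ (i + 1)).1
    · rw [hleaf h3 u hu, hc'p _ (by omega), hc'p _ (by omega)]
      exact (zmod_three_ne_add hε _ m).1.symm
  · intro v hv h3 u w hu hw huw
    rcases hcases v hv h3 with hv | ⟨i, hi, rfl⟩ | rfl
    · rw [hc'S u (h.closed v hv h3 u hu), hc'S w (h.closed v hv h3 w hw)]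
      exact h.rainbow v hv h3 u w hu hw huw
    · rcases (hp.adj_iff hi u).1 hu with rfl | rfl <;>
        rcases (hp.adj_iff hi w).1 hw with rfl | rfl
      · exact absurd rfl huw
      · rw [hc'p _ (by omega), hc'p _ (by omega)]
        exact (zmod_three_ne_add hε _ i).2
      · rw [hc'p _ (by omega), hc'p _ (by omega)]
        exact (zmod_three_ne_add hε _ i).2.symm
      · exact absurd rfl huw
    · exact absurd ((hleaf h3 u hu).trans (hleaf h3 w hw).symm) huw

theorem exists_isPartialColoring_univ {V : Type*} [Fintype V] {G : SimpleGraph V}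
    (hconn : G.Connected) (hclaw : ClawFree G) (hmax : ∀ v : V, (G.neighborSet v).ncard ≤ 3)
    (hmax' : ∃ v : V, (G.neighborSet v).ncard = 3)
    (hA : ∀ j : ℕ, 0 < j → ¬ HasAPath G (3 * j + 1)) {c₀ : V → ZMod 3}
    (hc₀ : ∀ u v, (threadGraph G).Adj u v → c₀ u ≠ c₀ v) :
    ∃ c, IsPartialColoring G c₀ Set.univ c := by
  obtain ⟨v₀, hv₀⟩ := hmax'
  have hex : {S : Set V | ∃ c, IsPartialColoring G c₀ S c}.Nonempty := by
    refine ⟨{v | (G.neighborSet v).ncard = 3}, c₀, fun v hv => hv, fun v _ => rfl, ?_, ?_, ?_⟩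
    · exact fun v hv h3 => absurd hv h3
    · exact fun v hv h3 => absurd hv h3
    · exact fun v hv h3 => absurd hv h3
  obtain ⟨S, hS⟩ := (Set.toFinite {S : Set V | ∃ c, IsPartialColoring G c₀ S c}).exists_maximal hex
  obtain ⟨c, hc⟩ := hS.prop
  suffices hS' : S = Set.univ from ⟨c, hS' ▸ hc⟩
  by_contra hne
  obtain ⟨x, hx⟩ := (Set.ne_univ_iff_exists_notMem S).1 hne
  obtain ⟨w⟩ := hconn.preconnected v₀ x
  obtain ⟨d, -, hd1, hd2⟩ := w.exists_boundary_dart S (hc.mem v₀ hv₀) hx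
  obtain ⟨S', c', hlt, hc'⟩ := hc.extend hclaw hmax hA hc₀ hd1 hd2 d.adj
  exact hlt.2 (hS.le_of_ge ⟨c', hc'⟩ hlt.1)

theorem IsPartialColoring.isDynamicColoring {V : Type*} [Fintype V] {G : SimpleGraph V}
    (hclaw : ClawFree G) {c₀ : V → ZMod 3}
    (hc₀ : ∀ u v, (threadGraph G).Adj u v → c₀ u ≠ c₀ v) {c : V → ZMod 3}
    (h : IsPartialColoring G c₀ Set.univ c) : IsDynamicColoring G 3 c := by
  have hproper : ∀ u v, G.Adj u v → c u ≠ c v := by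
    intro u v huv
    by_cases hu : (G.neighborSet u).ncard = 3
    · by_cases hv : (G.neighborSet v).ncard = 3
      · rw [h.eq u hu, h.eq v hv]
        exact hc₀ u v (threadGraph_adj_of_adj huv hu hv)
      · exact (h.proper v trivial hv u huv.symm).symm
    · exact h.proper u trivial hu v huv
  refine ⟨hproper, fun v hv => ?_⟩
  by_cases h3 : (G.neighborSet v).ncard = 3
  · obtain ⟨x, y, z, -, -, hN, hxy⟩ := hclaw.exists_adj_of_ncard_eq_three h3
    refine ⟨x, y, ?_, ?_, hproper x y hxy⟩
    · rw [← mem_neighborSet, hN]; simp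
    · rw [← mem_neighborSet, hN]; simp
  · obtain ⟨u, hu, w, hw, huw⟩ := (Set.one_lt_ncard (Set.toFinite _)).1 hv
    exact ⟨u, w, hu, hw, h.rainbow v trivial h3 u w hu hw huw⟩

theorem adj_iff_of_ncard_eq_three {V : Type*} {G : SimpleGraph V} {u x y z : V}
    (hu : (G.neighborSet u).ncard = 3) (hx : G.Adj u x) (hy : G.Adj u y) (hz : G.Adj u z)
    (hxy : x ≠ y) (hxz : x ≠ z) (hyz : y ≠ z) (w : V) :
    G.Adj u w ↔ w = x ∨ w = y ∨ w = z := by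
  have hsub : ({x, y, z} : Set V) ⊆ G.neighborSet u := by
    rintro t (rfl | rfl | rfl) <;> assumption
  have h3 : ({x, y, z} : Set V).ncard = 3 := Set.ncard_eq_three.2 ⟨x, y, z, hxy, hxz, hyz, rfl⟩
  have hfin : (G.neighborSet u).Finite := Set.finite_of_ncard_pos (by omega)
  have heq := Set.eq_of_subset_of_ncard_le hsub (by omega) hfin
  rw [← mem_neighborSet, ← heq]
  simp

theorem K4sub_adj_inl_inl {m : ℕ} (i j : Fin (m + 2)) :
    (K4sub m).Adj (Sum.inl i) (Sum.inl j) ↔ (i : ℕ) + 1 = j ∨ (j : ℕ) + 1 = i := by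
  simp only [K4sub, SimpleGraph.fromRel_adj, ne_eq, Sum.inl.injEq, Fin.ext_iff]
  omega

theorem K4sub_adj_inl_inr {m : ℕ} (i : Fin (m + 2)) (k : Fin 2) :
    (K4sub m).Adj (Sum.inl i) (Sum.inr k) ↔ (i : ℕ) = 0 ∨ (i : ℕ) = m + 1 := by
  simp [K4sub, SimpleGraph.fromRel_adj]

theorem K4sub_adj_inr_inr {m : ℕ} (k l : Fin 2) :
    (K4sub m).Adj (Sum.inr k) (Sum.inr l) ↔ k ≠ l := by
  simp [K4sub, SimpleGraph.fromRel_adj]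

theorem nonempty_iso_K4sub {V : Type*} {G : SimpleGraph V} (hconn : G.Connected) {p : ℕ → V}
    {m : ℕ} (hp : IsThread G p m) (hne : p 0 ≠ p (m + 1)) {c d : V}
    (hend : (G.neighborSet (p (m + 1))).ncard = 3)
    (hc : (G.neighborSet c).ncard = 3) (hd : (G.neighborSet d).ncard = 3) (hcd : G.Adj c d)
    (hac : G.Adj (p 0) c) (had : G.Adj (p 0) d) (hbc : G.Adj (p (m + 1)) c)
    (hbd : G.Adj (p (m + 1)) d) : Nonempty (G ≃g K4sub m) := by
  have hpne : ∀ v, (G.neighborSet v).ncard = 3 → G.Adj (p 0) v → G.Adj (p (m + 1)) v →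
      ∀ i ≤ m + 1, p i ≠ v := by
    rintro v hv h0 h1 i hi rfl
    rcases i with _ | i
    · exact h0.ne rfl
    rcases Nat.lt_or_ge i m with h | h
    · have := hp.ncard_eq_two h
      omega
    · obtain rfl : i = m := by omega
      exact h1.ne rfl
  have hpc := hpne c hc hac hbc
  have hpd := hpne d hd had hbd
  have hinj : ∀ i ≤ m + 1, ∀ j ≤ m + 1, p i = p j → i = j :=
    fun i hi j hj => hp.injOn (by omega) hne hi hj
  have hNa := adj_iff_of_ncard_eq_three hp.start hac had hp.first hcd.ne (hpc 1 (by omega)).symm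
    (hpd 1 (by omega)).symm
  have hNb := adj_iff_of_ncard_eq_three hend hbc hbd (hp.adj le_rfl).symm hcd.ne
    (hpc m (by omega)).symm (hpd m (by omega)).symm
  have hNc := adj_iff_of_ncard_eq_three hc hac.symm hbc.symm hcd hne (hpd 0 (by omega))
    (hpd (m + 1) le_rfl)
  have hNd := adj_iff_of_ncard_eq_three hd had.symm hbd.symm hcd.symm hne (hpc 0 (by omega))
    (hpc (m + 1) le_rfl)
  have hpp : ∀ i ≤ m + 1, ∀ j ≤ m + 1, G.Adj (p i) (p j) ↔ i + 1 = j ∨ j + 1 = i := by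
    intro i hi j hj
    constructor
    · intro h
      rcases i with _ | i
      · rcases (hNa _).1 h with h | h | h
        · exact absurd h (hpc j hj)
        · exact absurd h (hpd j hj)
        · exact Or.inl (hinj j hj 1 (by omega) h).symm
      rcases Nat.lt_or_ge i m with him | him
      · rcases (hp.adj_iff him _).1 h with h | h
        · exact Or.inr (by rw [hinj j hj i (by omega) h])
        · exact Or.inl (hinj j hj _ (by omega) h).symm
      · obtain rfl : i = m := by omega
        rcases (hNb _).1 h with h | h | h
        · exact absurd h (hpc j hj)
        · exact absurd h (hpd j hj)
        · exact Or.inr (by rw [hinj j hj i (by omega) h])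
    · rintro (rfl | rfl)
      · exact hp.adj (by omega)
      · exact (hp.adj (by omega)).symm
  let f : Fin (m + 2) ⊕ Fin 2 → V := Sum.elim (fun i => p i) ![c, d]
  have hmid : ∀ k : Fin 2, ∀ i ≤ m + 1, G.Adj (p i) (![c, d] k) ↔ i = 0 ∨ i = m + 1 := by
    have key : ∀ v, (∀ w, G.Adj v w → w = p 0 ∨ w = p (m + 1) ∨ w = c ∨ w = d) →
        G.Adj (p 0) v → G.Adj (p (m + 1)) v → ∀ i ≤ m + 1, G.Adj (p i) v ↔ i = 0 ∨ i = m + 1 := by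
      intro v hv h0 h1 i hi
      constructor
      · intro h
        rcases hv _ h.symm with h | h | h | h
        · exact Or.inl (hinj i hi 0 (by omega) h)
        · exact Or.inr (hinj i hi _ le_rfl h)
        · exact absurd h (hpc i hi)
        · exact absurd h (hpd i hi)
      · rintro (rfl | rfl) <;> assumption
    intro k
    fin_cases k
    · exact key c (fun w hw => by have := (hNc w).1 hw; tauto) hac hbc
    · exact key d (fun w hw => by have := (hNd w).1 hw; tauto) had hbd
  have hfinj : Function.Injective f := by
    have hcd' : Function.Injective (![c, d] : Fin 2 → V) := by
      intro k l h
      fin_cases k <;> fin_cases l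
      · rfl
      · exact absurd h hcd.ne
      · exact absurd h hcd.ne'
      · rfl
    refine Function.Injective.sumElim (fun i j h => Fin.ext (hinj i (by omega) j (by omega) h))
      hcd' fun i k h => ?_
    fin_cases k
    · exact hpc i (by omega) h
    · exact hpd i (by omega) h
  have hp_mem : ∀ i ≤ m + 1, p i ∈ Set.range f := fun i hi => ⟨Sum.inl ⟨i, by omega⟩, rfl⟩
  have hc_mem : c ∈ Set.range f := ⟨Sum.inr 0, rfl⟩
  have hd_mem : d ∈ Set.range f := ⟨Sum.inr 1, rfl⟩
  have hclosed : ∀ v ∈ Set.range f, ∀ w, G.Adj v w → w ∈ Set.range f := by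
    rintro _ ⟨⟨i, hi⟩ | k, rfl⟩ w hw
    · simp only [f, Sum.elim_inl] at hw
      rcases i with _ | i
      · rcases (hNa _).1 hw with rfl | rfl | rfl
        · exact hc_mem
        · exact hd_mem
        · exact hp_mem _ (by omega)
      rcases Nat.lt_or_ge i m with him | him
      · rcases (hp.adj_iff him _).1 hw with rfl | rfl
        · exact hp_mem _ (by omega)
        · exact hp_mem _ (by omega)
      · obtain rfl : i = m := by omega
        rcases (hNb _).1 hw with rfl | rfl | rfl
        · exact hc_mem
        · exact hd_mem
        · exact hp_mem _ (by omega)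
    · fin_cases k
      · rcases (hNc w).1 hw with rfl | rfl | rfl
        · exact hp_mem _ (by omega)
        · exact hp_mem _ (by omega)
        · exact hd_mem
      · rcases (hNd w).1 hw with rfl | rfl | rfl
        · exact hp_mem _ (by omega)
        · exact hp_mem _ (by omega)
        · exact hc_mem
  have hfsurj : Function.Surjective f := by
    intro x
    by_contra hx
    obtain ⟨w⟩ := hconn.preconnected c x
    obtain ⟨e, -, he1, he2⟩ := w.exists_boundary_dart (Set.range f) hc_mem hx
    exact he2 (hclosed _ he1 _ e.adj)
  refine ⟨RelIso.symm ⟨Equiv.ofBijective f ⟨hfinj, hfsurj⟩, ?_⟩⟩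
  rintro (i | k) (j | l)
  · rw [K4sub_adj_inl_inl]
    exact hpp i (by omega) j (by omega)
  · rw [K4sub_adj_inl_inr]
    exact hmid l i (by omega)
  · rw [(K4sub m).adj_comm, K4sub_adj_inl_inr, ← hmid k j (by omega)]
    exact G.adj_comm _ _
  · rw [K4sub_adj_inr_inr]
    fin_cases k <;> fin_cases l
    · exact iff_of_false (fun h => h.ne rfl) (fun h => h rfl)
    · exact iff_of_true hcd (by decide)
    · exact iff_of_true hcd.symm (by decide)
    · exact iff_of_false (fun h => h.ne rfl) (fun h => h rfl)

theorem threadGraph_noK4 {V : Type*} {G : SimpleGraph V} (hconn : G.Connected)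
    (hclaw : ClawFree G) (hA : ∀ j : ℕ, 0 < j → ¬ HasAPath G (3 * j + 1))
    (hK : ¬ ∃ m : ℕ, (m % 3 = 0 ∨ m % 3 = 1) ∧ Nonempty (G ≃g K4sub m)) :
    NoK4 (threadGraph G) := by
  have hdeg : ∀ u v, (threadGraph G).Adj u v → (G.neighborSet u).ncard = 3 := by
    rintro u v ⟨-, p, m, hp, rfl, -, -⟩
    exact hp.start
  have diamond : ∀ a b c d, (threadGraph G).Adj a b → (threadGraph G).Adj c d → G.Adj c d →
      G.Adj a c → G.Adj a d → G.Adj b c → G.Adj b d → False := by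
    rintro a b c d ⟨hne, p, m, hp, rfl, rfl, hb⟩ hcd' hcd hac had hbc hbd
    have := hp.mod_ne_two hA hb hne
    exact hK ⟨m, by omega, nonempty_iso_K4sub hconn hp hne hb (hdeg _ _ hcd')
      (hdeg _ _ hcd'.symm) hcd hac had hbc hbd⟩
  have triangle : ∀ a b c d, (threadGraph G).Adj a b → (threadGraph G).Adj a c →
      (threadGraph G).Adj a d → b ≠ c → b ≠ d → c ≠ d →
      (G.Adj a b ∧ G.Adj a c ∧ G.Adj b c) ∨ (G.Adj a b ∧ G.Adj a d ∧ G.Adj b d) ∨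
        (G.Adj a c ∧ G.Adj a d ∧ G.Adj c d) := by
    intro a b c d hb hc hd hbc hbd hcd
    rcases threadGraph_local hclaw a with ⟨x, y, h⟩ | ⟨x, y, e, hx, hy, hxy, ha, hx3, hy3, h⟩
    · have := h b hb
      have := h c hc
      have := h d hd
      grind
    · have hb := h b hb
      have hc := h c hc
      have hd := h d hd
      clear h
      have hyx := hxy.symm
      rcases hb with rfl | rfl | rfl <;> rcases hc with rfl | rfl | rfl <;>
        rcases hd with rfl | rfl | rfl <;> first | contradiction | tauto
  have step : ∀ a b c d, (threadGraph G).Adj a b → (threadGraph G).Adj a c →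
      (threadGraph G).Adj a d → (threadGraph G).Adj b c → (threadGraph G).Adj b d →
      (threadGraph G).Adj c d → G.Adj a b → G.Adj a c → G.Adj b c → False := by
    intro a b c d hab hac had hbc hbd hcd gab gac gbc
    rcases triangle d a b c had.symm hbd.symm hcd.symm hab.ne hac.ne hbc.ne with
      ⟨h1, h2, -⟩ | ⟨h1, h2, -⟩ | ⟨h1, h2, -⟩
    · exact diamond c d a b hcd hab gab gac.symm gbc.symm h1 h2
    · exact diamond b d a c hbd hac gac gab.symm gbc h1 h2
    · exact diamond a d b c had hbc gbc gab gac h1 h2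
  intro a b c d hab hac had hbc hbd hcd
  rcases triangle a b c d hab hac had hbc.ne hbd.ne hcd.ne with
    ⟨h1, h2, h3⟩ | ⟨h1, h2, h3⟩ | ⟨h1, h2, h3⟩
  · exact step a b c d hab hac had hbc hbd hcd h1 h2 h3
  · exact step a b d c hab had hac hbd hbc hcd.symm h1 h2 h3
  · exact step a c d b hac had hab hcd hbc.symm hbd.symm h1 h2 h3

theorem fin_three_eq_of_rainbow : ∀ x y z w : Fin 3,
    x ≠ y ∧ x ≠ z ∧ y ≠ z ∧ y ≠ w ∧ z ≠ w → w = x := by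
  decide

theorem K4sub_not_isDynamicColoring {m : ℕ} (hm : m % 3 = 0 ∨ m % 3 = 1)
    (c : Fin (m + 2) ⊕ Fin 2 → Fin 3) : ¬ IsDynamicColoring (K4sub m) 3 c := by
  rintro ⟨hproper, hdyn⟩
  let f : ℕ → Fin 3 := fun i => if h : i < m + 2 then c (Sum.inl ⟨i, h⟩) else 0
  have hf : ∀ i (h : i < m + 2), f i = c (Sum.inl ⟨i, h⟩) := fun i h => dif_pos h
  have hstep : ∀ i < m + 1, f i ≠ f (i + 1) := by
    intro i hi
    rw [hf i (by omega), hf (i + 1) (by omega)]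
    exact hproper ((K4sub_adj_inl_inl _ _).2 (Or.inl rfl))
  have hskip : ∀ i < m, f i ≠ f (i + 2) := by
    intro i hi
    have hN : (K4sub m).neighborSet (Sum.inl ⟨i + 1, by omega⟩) =
        {Sum.inl ⟨i, by omega⟩, Sum.inl ⟨i + 2, by omega⟩} := by
      ext (j | k)
      · rw [mem_neighborSet, K4sub_adj_inl_inl]
        simp only [Set.mem_insert_iff, Set.mem_singleton_iff, Sum.inl.injEq, Fin.ext_iff]
        omega
      · rw [mem_neighborSet, K4sub_adj_inl_inr]
        exact iff_of_false (by dsimp only; omega) (by simp)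
    have hcard : 2 ≤ ((K4sub m).neighborSet (Sum.inl ⟨i + 1, by omega⟩)).ncard := by
      rw [hN, Set.ncard_pair (by simp [Fin.ext_iff])]
    obtain ⟨u, w, hu, hw, huw⟩ := hdyn _ hcard
    rw [← mem_neighborSet, hN] at hu hw
    rw [hf i (by omega), hf (i + 2) (by omega)]
    rcases hu with rfl | rfl <;> rcases hw with rfl | rfl
    · exact absurd rfl huw
    · exact huw
    · exact huw.symm
    · exact absurd rfl huw
  have hthree : ∀ i, i + 2 < m + 1 → f (i + 3) = f i := by
    intro i hi
    have h1 := hstep i (by omega)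
    have h2 := hstep (i + 1) (by omega)
    have h3 := hstep (i + 2) (by omega)
    have h4 := hskip i (by omega)
    have h5 := hskip (i + 1) (by omega)
    simp only [add_assoc, Nat.reduceAdd] at h2 h3 h5
    exact fin_three_eq_of_rainbow _ _ _ _ ⟨h1, h4, h2, h5, h3⟩
  have hperiod : ∀ r k, r + 3 * k ≤ m + 1 → f (r + 3 * k) = f r := by
    intro r k
    induction k with
    | zero => simp
    | succ k ih =>
      intro h
      rw [← ih (by omega), show r + 3 * (k + 1) = r + 3 * k + 3 by ring]
      exact hthree _ (by omega)
  have hends : f (m + 1) = f 0 := by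
    have hmid : ∀ k : Fin 2, f 0 ≠ c (Sum.inr k) ∧ f (m + 1) ≠ c (Sum.inr k) := by
      intro k
      rw [hf 0 (by omega), hf (m + 1) (by omega)]
      exact ⟨hproper ((K4sub_adj_inl_inr _ _).2 (Or.inl rfl)),
        hproper ((K4sub_adj_inl_inr _ _).2 (Or.inr rfl))⟩
    have h0 := hmid 0
    have h1 := hmid 1
    have h2 : c (Sum.inr 0) ≠ c (Sum.inr 1) :=
      hproper ((K4sub_adj_inr_inr (m := m) 0 1).2 (by decide))
    revert h0 h1 h2
    generalize c (Sum.inr 0) = x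
    generalize c (Sum.inr 1) = y
    generalize f 0 = z
    generalize f (m + 1) = w
    revert x y z w
    decide
  rcases hm with hm | hm
  · have h := hperiod 1 (m / 3) (by omega)
    rw [show 1 + 3 * (m / 3) = m + 1 by omega, hends] at h
    exact hstep 0 (by omega) h
  · have h := hperiod 2 (m / 3) (by omega)
    rw [show 2 + 3 * (m / 3) = m + 1 by omega, hends] at h
    exact hskip 0 (by omega) h

theorem IsDynamicColoring.comp_iso {V W : Type*} {G : SimpleGraph V} {H : SimpleGraph W} {k : ℕ}
    {c : V → Fin k} (hc : IsDynamicColoring G k c) (e : G ≃g H) :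
    IsDynamicColoring H k (c ∘ e.symm) := by
  refine ⟨fun u v h => hc.1 (e.symm.map_adj_iff.2 h), fun v hv => ?_⟩
  have hN : (G.neighborSet (e.symm v)).ncard = (H.neighborSet v).ncard :=
    (Set.ncard_congr' (e.symm.mapNeighborSet v)).symm
  obtain ⟨u, w, hu, hw, huw⟩ := hc.2 (e.symm v) (hN ▸ hv)
  refine ⟨e u, e w, ?_, ?_, by simpa using huw⟩
  · simpa using e.map_adj_iff.2 hu
  · simpa using e.map_adj_iff.2 hw

/-- A connected claw-free graph with `Δ(G) = 3` containing no `A_{3j+1}` (`j ≥ 1`)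
has a dynamic 3-coloring iff it is not isomorphic to a graph obtained from `K_4`
by subdividing one edge `m` times with `m ≡ 0` or `1 (mod 3)`. -/
theorem dynamic_three_colorable_iff_not_K4sub {V : Type*} [Fintype V]
    (G : SimpleGraph V) (hconn : G.Connected) (hclaw : ClawFree G)
    (hmax : ∀ v : V, (G.neighborSet v).ncard ≤ 3)
    (hmax' : ∃ v : V, (G.neighborSet v).ncard = 3)
    (hA : ∀ j : ℕ, 0 < j → ¬ HasAPath G (3 * j + 1)) :
    (∃ c : V → Fin 3, IsDynamicColoring G 3 c) ↔
      ¬ ∃ m : ℕ, (m % 3 = 0 ∨ m % 3 = 1) ∧ Nonempty (G ≃g K4sub m) := by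
  constructor
  · rintro ⟨c, hc⟩ ⟨m, hm, ⟨e⟩⟩
    exact K4sub_not_isDynamicColoring hm _ (hc.comp_iso e)
  · intro hK
    obtain ⟨c₀, hc₀⟩ := exists_coloring_of_card_le _ (threadGraph G) Finset.univ le_rfl
      (fun _ _ _ => Finset.mem_univ _) (threadGraph_subcubicTriangled hclaw)
      (threadGraph_noK4 hconn hclaw hA hK)
    obtain ⟨c, hc⟩ := exists_isPartialColoring_univ hconn hclaw hmax hmax' hA hc₀
    exact ⟨c, hc.isDynamicColoring hclaw hc₀⟩
end

section
/- Let G be a connected claw-free graph with maximum degree Δ(G) = 3 and minimum degree at least 2 that contains no A_i for any i of the form i = 3j+1 (j a positive integer). If the number of vertices of degree 3 in G is not equal to 4, then G has a dynamic 3-coloring. -/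
open SimpleGraph

namespace SimpleGraph

variable {V : Type*}

/-- If `u` has at most three neighbours in `H`, then it has at most three neighbours in `H'` when
a neighbour `y` is replaced by `z`. -/
theorem degree_le_three_of_replace {H H' : SimpleGraph V} {u y z : V}
    (hdeg : ∀ a b c d, H.Adj u a → H.Adj u b → H.Adj u c → H.Adj u d →
      a = b ∨ a = c ∨ a = d ∨ b = c ∨ b = d ∨ c = d)
    (huy : H.Adj u y) (h : ∀ v, H'.Adj u v → H.Adj u v ∨ v = z) (hy : ¬ H'.Adj u y)
    (p q r s : V) (hp : H'.Adj u p) (hq : H'.Adj u q) (hr : H'.Adj u r) (hs : H'.Adj u s) :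
    p = q ∨ p = r ∨ p = s ∨ q = r ∨ q = s ∨ r = s := by
  have hyv : ∀ v, H'.Adj u v → y ≠ v := fun v hv e => hy (e ▸ hv)
  have := hyv p hp
  have := hyv q hq
  have := hyv r hr
  have := hyv s hs
  have := hdeg p q r s
  have := hdeg y q r s huy
  have := hdeg y p r s huy
  have := hdeg y p q s huy
  have := hdeg y p q r huy
  have := h p hp
  have := h q hq
  have := h r hr
  have := h s hs
  clear hdeg h hyv
  grind

/-- If `u` is not the center of a claw in `H`, then among any three neighbours of `u` in `H'` two
are adjacent in `H`, when a neighbour `y` that has no neighbour in common with `u` is replaced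
by `z`. -/
theorem clawFree_of_replace {H H' : SimpleGraph V} {u y z : V}
    (hclaw : ∀ a b c, H.Adj u a → H.Adj u b → H.Adj u c →
      a = b ∨ a = c ∨ b = c ∨ H.Adj a b ∨ H.Adj a c ∨ H.Adj b c)
    (huy : H.Adj u y) (h : ∀ v, H'.Adj u v → H.Adj u v ∨ v = z) (hy : ¬ H'.Adj u y)
    (hnyv : ∀ v, H'.Adj u v → ¬ H.Adj y v)
    (p q r : V) (hp : H'.Adj u p) (hq : H'.Adj u q) (hr : H'.Adj u r) :
    p = q ∨ p = r ∨ q = r ∨ H.Adj p q ∨ H.Adj p r ∨ H.Adj q r := by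
  have hyv : ∀ v, H'.Adj u v → y ≠ v := fun v hv e => hy (e ▸ hv)
  have := hyv p hp
  have := hyv q hq
  have := hyv r hr
  have := hnyv p hp
  have := hnyv q hq
  have := hnyv r hr
  have := hclaw p q r
  have := hclaw y q r huy
  have := hclaw y p r huy
  have := hclaw y p q huy
  have := h p hp
  have := h q hq
  have := h r hr
  clear hclaw h hyv hnyv
  grind

set_option maxHeartbeats 800000 in
/-- A finite `K₄`-free claw-free graph of maximum degree at most three is 3-colorable. -/
theorem exists_three_coloring_of_clawFree [Finite V] (H : SimpleGraph V)
    (hdeg : ∀ u a b c d, H.Adj u a → H.Adj u b → H.Adj u c → H.Adj u d →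
      a = b ∨ a = c ∨ a = d ∨ b = c ∨ b = d ∨ c = d)
    (hclaw : ∀ u a b c, H.Adj u a → H.Adj u b → H.Adj u c →
      a = b ∨ a = c ∨ b = c ∨ H.Adj a b ∨ H.Adj a c ∨ H.Adj b c)
    (hK4 : ∀ a b c d, H.Adj a b → H.Adj a c → H.Adj a d → H.Adj b c → H.Adj b d →
      ¬ H.Adj c d) :
    ∃ f : V → Fin 3, ∀ u v, H.Adj u v → f u ≠ f v := by
  classical
  induction hn : H.support.ncard using Nat.strong_induction_on generalizing H with
  | _ n ih =>
  have drop : ∀ (H' : SimpleGraph V) (x : V), x ∈ H.support → x ∉ H'.support →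
      H'.support ⊆ H.support → H'.support.ncard < n := by
    intro H' x hx hx' hss
    rw [← hn]
    exact Set.ncard_lt_ncard ⟨hss, fun h => hx' (h hx)⟩ (Set.toFinite _)
  -- colorings of the graph with a nonempty set of non-isolated vertices removed
  have del : ∀ (S : Set V) (x : V), x ∈ H.support → x ∈ S →
      ∃ f : V → Fin 3, ∀ u v, u ∉ S → v ∉ S → H.Adj u v → f u ≠ f v := by
    intro S x hx hxS
    let H' : SimpleGraph V :=
      { Adj := fun u v => u ∉ S ∧ v ∉ S ∧ H.Adj u v
        symm := ⟨fun u v h => ⟨h.2.1, h.1, h.2.2.symm⟩⟩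
        loopless := ⟨fun u h => H.loopless.irrefl u h.2.2⟩ }
    obtain ⟨f, hf⟩ := ih _ (drop H' x hx (fun ⟨y, hy⟩ => hy.1 hxS)
      (fun u ⟨y, hy⟩ => ⟨y, hy.2.2⟩)) H'
      (fun u a b c d ha hb hc hd => hdeg u a b c d ha.2.2 hb.2.2 hc.2.2 hd.2.2)
      (fun u a b c ha hb hc => by
        rcases hclaw u a b c ha.2.2 hb.2.2 hc.2.2 with h | h | h | h | h | h
        · exact .inl h
        · exact .inr (.inl h)
        · exact .inr (.inr (.inl h))
        · exact .inr (.inr (.inr (.inl ⟨ha.2.1, hb.2.1, h⟩)))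
        · exact .inr (.inr (.inr (.inr (.inl ⟨ha.2.1, hc.2.1, h⟩))))
        · exact .inr (.inr (.inr (.inr (.inr ⟨hb.2.1, hc.2.1, h⟩)))))
      (fun a b c d h1 h2 h3 h4 h5 h6 =>
        hK4 a b c d h1.2.2 h2.2.2 h3.2.2 h4.2.2 h5.2.2 h6.2.2) rfl
    exact ⟨f, fun u v hu hv h => hf u v ⟨hu, hv, h⟩⟩
  have third : ∀ x a b, H.Adj x a → H.Adj x b → a ≠ b →
      ∃ c, ∀ v, H.Adj x v → v = a ∨ v = b ∨ v = c := by
    intro x a b ha hb hab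
    by_cases h : ∃ c, H.Adj x c ∧ c ≠ a ∧ c ≠ b
    · obtain ⟨c, hc, hca, hcb⟩ := h
      refine ⟨c, fun v hv => ?_⟩
      have := hdeg x a b c v ha hb hc hv
      grind
    · exact ⟨a, fun v hv => by by_contra hh; exact h ⟨v, hv, by tauto, by tauto⟩⟩
  by_cases hlow : ∃ u a b, H.Adj u a ∧ ∀ v, H.Adj u v → v = a ∨ v = b
  · obtain ⟨u, a, b, hua, hu⟩ := hlow
    obtain ⟨f, hf⟩ := del {u} u ⟨a, hua⟩ rfl
    have key : ∀ A B : Fin 3, ∃ t, t ≠ A ∧ t ≠ B := by decide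
    obtain ⟨t, hta, htb⟩ := key (f a) (f b)
    refine ⟨Function.update f u t, fun v w hvw => ?_⟩
    have hne := hvw.ne
    have := hf v w
    have := hu v
    have := hu w
    have := hvw.symm
    simp only [Function.update_apply, Set.mem_singleton_iff] at *
    grind
  have hthree : ∀ u a b, H.Adj u a → H.Adj u b → ∃ c, H.Adj u c ∧ c ≠ a ∧ c ≠ b := by
    intro u a b ha hb
    by_contra hh
    exact hlow ⟨u, a, b, ha, fun v hv => by by_contra h2; exact hh ⟨v, hv, by tauto, by tauto⟩⟩
  by_cases hdia : ∃ x d a b, H.Adj x a ∧ H.Adj x b ∧ H.Adj d a ∧ H.Adj d b ∧ H.Adj a b ∧ x ≠ d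
  · obtain ⟨x, d, a, b, hxa, hxb, hda, hdb, hab, hxd⟩ := hdia
    obtain ⟨c, hc⟩ := third x a b hxa hxb hab.ne
    obtain ⟨e, he⟩ := third d a b hda hdb hab.ne
    obtain ⟨f, hf⟩ := del {x, d, a, b} x ⟨a, hxa⟩ (by simp)
    have hnxd : ¬ H.Adj x d := fun h => hK4 x d a b h hxa hxb hda hdb hab
    have hNa : ∀ v, H.Adj a v → v = x ∨ v = d ∨ v = b := by
      intro v hv
      have := hdeg a x d b v hxa.symm hda.symm hab hv
      have := hxb.ne
      have := hdb.ne
      grind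
    have hNb : ∀ v, H.Adj b v → v = x ∨ v = d ∨ v = a := by
      intro v hv
      have := hdeg b x d a v hxb.symm hdb.symm hab.symm hv
      have := hxa.ne
      have := hda.ne
      grind
    have key : ∀ A B : Fin 3, ∃ t r s, t ≠ A ∧ t ≠ B ∧ t ≠ r ∧ t ≠ s ∧ r ≠ s := by decide
    obtain ⟨t, r, s, htc, hte, htr, hts, hrs⟩ := key (f c) (f e)
    have hxa' := hxa.ne
    have hxb' := hxb.ne
    have hda' := hda.ne
    have hdb' := hdb.ne
    have hab' := hab.ne
    have main : ∀ v w, H.Adj v w → v ∈ ({x, d, a, b} : Set V) →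
        (if v = x ∨ v = d then t else if v = a then r else if v = b then s else f v) ≠
        (if w = x ∨ w = d then t else if w = a then r else if w = b then s else f w) := by
      intro v w hvw hv
      have hvw' := hvw.ne
      have := hvw.symm
      simp only [Set.mem_insert_iff, Set.mem_singleton_iff] at hv
      rcases hv with rfl | rfl | rfl | rfl
      · have := hc w hvw
        grind
      · have := he w hvw
        grind
      · have := hNa w hvw
        grind
      · have := hNb w hvw
        grind
    refine ⟨fun v => if v = x ∨ v = d then t else if v = a then r else if v = b then s else f v,
      fun v w hvw => ?_⟩
    by_cases hv : v ∈ ({x, d, a, b} : Set V)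
    · exact main v w hvw hv
    by_cases hw : w ∈ ({x, d, a, b} : Set V)
    · exact (main w v hvw.symm hw).symm
    have := hf v w hv hw hvw
    simp only [Set.mem_insert_iff, Set.mem_singleton_iff] at hv hw
    grind
  by_cases hemp : ∃ u a, H.Adj u a
  swap
  · exact ⟨fun _ => 0, fun u v h => (hemp ⟨u, v, h⟩).elim⟩
  have htri : ∃ x a b, H.Adj x a ∧ H.Adj x b ∧ H.Adj a b := by
    obtain ⟨u, a, ha⟩ := hemp
    obtain ⟨b, hb, hba, -⟩ := hthree u a a ha ha
    obtain ⟨c, hc, hca, hcb⟩ := hthree u a b ha hb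
    rcases hclaw u a b c ha hb hc with h | h | h | h | h | h
    · exact absurd h.symm hba
    · exact absurd h.symm hca
    · exact absurd h.symm hcb
    · exact ⟨u, a, b, ha, hb, h⟩
    · exact ⟨u, a, c, ha, hc, h⟩
    · exact ⟨u, b, c, hb, hc, h⟩
  obtain ⟨x, a, b, hxa, hxb, hab⟩ := htri
  have outer : ∀ x a b, H.Adj x a → H.Adj x b → H.Adj a b →
      ∃ y, H.Adj x y ∧ y ≠ a ∧ y ≠ b ∧ ∀ v, H.Adj x v → v = a ∨ v = b ∨ v = y := by
    intro x a b ha hb hab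
    obtain ⟨y, hy, hya, hyb⟩ := hthree x a b ha hb
    refine ⟨y, hy, hya, hyb, fun v hv => ?_⟩
    have := hdeg x a b y v ha hb hy hv
    have := hab.ne
    grind
  obtain ⟨x', hxx', hx'a, hx'b, hNx⟩ := outer x a b hxa hxb hab
  obtain ⟨a', haa', ha'x, ha'b, hNa⟩ := outer a x b hxa.symm hab hxb
  obtain ⟨b', hbb', hb'x, hb'a, hNb⟩ := outer b x a hxb.symm hab.symm hxa
  have hx'x := hxx'.ne'
  have ha'a := haa'.ne'
  have hb'b := hbb'.ne'
  have hxa' := hxa.ne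
  have hxb' := hxb.ne
  have hab' := hab.ne
  have hx'a' : x' ≠ a' := by
    rintro rfl
    exact hdia ⟨b, x', x, a, hxb.symm, hab.symm, hxx'.symm, haa'.symm, hxa, hx'b.symm⟩
  -- the triangle `x a b` is removed and `x' a'` becomes an edge
  let T : Set V := {x, a, b}
  have hx'T : x' ∉ T := by simp [T, hx'x, hx'a, hx'b]
  have ha'T : a' ∉ T := by simp [T, ha'x, ha'a, ha'b]
  have hb'T : b' ∉ T := by simp [T, hb'x, hb'a, hb'b]
  let H' : SimpleGraph V :=
    { Adj := fun u v => u ∉ T ∧ v ∉ T ∧ (H.Adj u v ∨ (u = x' ∧ v = a') ∨ (u = a' ∧ v = x'))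
      symm := ⟨fun u v h => ⟨h.2.1, h.1, by
        rcases h.2.2 with h | h | h
        · exact .inl h.symm
        · exact .inr (.inr h.symm)
        · exact .inr (.inl h.symm)⟩⟩
      loopless := ⟨fun u h => by
        rcases h.2.2 with h | h | h
        · exact h.ne rfl
        · exact hx'a' (h.1.symm.trans h.2)
        · exact hx'a' (h.2.symm.trans h.1)⟩ }
  have hxT : x ∈ T := by simp [T]
  have haT : a ∈ T := by simp [T]
  have old : ∀ u v, H'.Adj u v → H.Adj u v ∨ (u = x' ∧ v = a') ∨ (u = a' ∧ v = x') :=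
    fun u v h => h.2.2
  have hx'only : ∀ v, v ∉ T → H.Adj x v → v = x' := by
    intro v hv h
    have := hNx v h
    simp only [T, Set.mem_insert_iff, Set.mem_singleton_iff] at hv
    tauto
  have ha'only : ∀ v, v ∉ T → H.Adj a v → v = a' := by
    intro v hv h
    have := hNa v h
    simp only [T, Set.mem_insert_iff, Set.mem_singleton_iff] at hv
    tauto
  -- at each end of the new edge, a vertex of the triangle is replaced by the other end
  have swap : ∀ u, u ∉ T → (∀ v, H'.Adj u v → H.Adj u v) ∨
      ∃ y z, y ∈ T ∧ H.Adj u y ∧ (∀ v, v ∉ T → H.Adj y v → v = u) ∧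
        ∀ v, H'.Adj u v → H.Adj u v ∨ v = z := by
    intro u hu
    by_cases h1 : u = x'
    · subst h1
      exact .inr ⟨x, a', hxT, hxx'.symm, hx'only, fun v hv => (old u v hv).imp_right
        fun h => h.elim (·.2) (fun h => absurd h.1 hx'a')⟩
    by_cases h2 : u = a'
    · subst h2
      exact .inr ⟨a, x', haT, haa'.symm, ha'only, fun v hv => (old u v hv).imp_right
        fun h => h.elim (fun h => absurd h.1 h1) (·.2)⟩
    · exact .inl fun v hv => (old u v hv).resolve_right
        fun h => h.elim (fun h => h1 h.1) (fun h => h2 h.1)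
  have edge_of_K4 : ∀ p q r s, H'.Adj p q → H'.Adj p r → H'.Adj p s → H'.Adj q r →
      H'.Adj q s → H'.Adj r s → H.Adj p q := by
    intro p q r s hpq hpr hps hqr hqs hrs
    have back : ∀ w w', H'.Adj w w' → w' ≠ x' → w' ≠ a' → H.Adj w w' := fun w w' h h1 h2 =>
      (old w w' h).resolve_right fun h => h.elim (fun h => h2 h.2) (fun h => h1 h.2)
    by_contra hcon
    have hends : (p = x' ∧ q = a') ∨ (p = a' ∧ q = x') := (old p q hpq).resolve_left hcon
    have hr : r ≠ x' ∧ r ≠ a' := by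
      have := hpr.ne
      have := hqr.ne
      grind
    have hs : s ≠ x' ∧ s ≠ a' := by
      have := hps.ne
      have := hqs.ne
      grind
    exact hdia ⟨p, q, r, s, back _ _ hpr hr.1 hr.2, back _ _ hps hs.1 hs.2,
      back _ _ hqr hr.1 hr.2, back _ _ hqs hs.1 hs.2, back _ _ hrs hs.1 hs.2, hpq.ne⟩
  obtain ⟨f, hf⟩ := ih _ (drop H' x ⟨a, hxa⟩ (fun ⟨y, hy⟩ => hy.1 hxT) (by
      rintro u ⟨v, hv⟩
      rcases old u v hv with h | h | h
      · exact ⟨v, h⟩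
      · exact ⟨x, h.1 ▸ hxx'.symm⟩
      · exact ⟨a, h.1 ▸ haa'.symm⟩)) H'
    (fun u p q r s hp hq hr hs => by
      rcases swap u hp.1 with h | ⟨y, z, hy, huy, -, h⟩
      · exact hdeg u p q r s (h p hp) (h q hq) (h r hr) (h s hs)
      · exact degree_le_three_of_replace (hdeg u) huy h (fun hv => hv.2.1 hy) p q r s hp hq hr hs)
    (fun u p q r hp hq hr => by
      have hlift : ∀ {v w}, H'.Adj u v → H'.Adj u w → H.Adj v w → H'.Adj v w :=
        fun hv hw hvw => ⟨hv.2.1, hw.2.1, .inl hvw⟩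
      have hcases : p = q ∨ p = r ∨ q = r ∨ H.Adj p q ∨ H.Adj p r ∨ H.Adj q r := by
        rcases swap u hp.1 with h | ⟨y, z, hy, huy, hyu, h⟩
        · exact hclaw u p q r (h p hp) (h q hq) (h r hr)
        · exact clawFree_of_replace (hclaw u) huy h (fun hv => hv.2.1 hy)
            (fun v hv hyv => hv.ne (hyu v hv.2.1 hyv).symm) p q r hp hq hr
      exact hcases.imp_right (Or.imp_right (Or.imp_right
        (Or.imp (hlift hp hq) (Or.imp (hlift hp hr) (hlift hq hr))))))
    (fun p q r s h1 h2 h3 h4 h5 h6 => hK4 p q r s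
      (edge_of_K4 p q r s h1 h2 h3 h4 h5 h6)
      (edge_of_K4 p r q s h2 h1 h3 h4.symm h6 h5)
      (edge_of_K4 p s q r h3 h1 h2 h5.symm h6.symm h4)
      (edge_of_K4 q r p s h4 h1.symm h5 h2.symm h6 h3)
      (edge_of_K4 q s p r h5 h1.symm h4 h3.symm h6.symm h2)
      (edge_of_K4 r s p q h6 h2.symm h4.symm h3.symm h5.symm h1)) rfl
  have key : ∀ X A B : Fin 3, X ≠ A → ∃ r s t, r ≠ X ∧ s ≠ A ∧ t ≠ B ∧ r ≠ s ∧ r ≠ t ∧ s ≠ t := by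
    decide
  obtain ⟨r, s, t, hr, hs, ht, hrs, hrt, hst⟩ := key (f x') (f a') (f b')
    (hf x' a' ⟨hx'T, ha'T, .inr (.inl ⟨rfl, rfl⟩)⟩)
  have main : ∀ v w, H.Adj v w → v ∈ T →
      (if v = x then r else if v = a then s else if v = b then t else f v) ≠
      (if w = x then r else if w = a then s else if w = b then t else f w) := by
    intro v w hvw hv
    have hvw' := hvw.ne
    simp only [T, Set.mem_insert_iff, Set.mem_singleton_iff] at hv
    rcases hv with rfl | rfl | rfl
    · have := hNx w hvw
      grind
    · have := hNa w hvw
      grind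
    · have := hNb w hvw
      grind
  refine ⟨fun v => if v = x then r else if v = a then s else if v = b then t else f v,
    fun v w hvw => ?_⟩
  by_cases hv : v ∈ T
  · exact main v w hvw hv
  by_cases hw : w ∈ T
  · exact (main w v hvw.symm hw).symm
  have := hf v w ⟨hv, hw, .inl hvw⟩
  simp only [T, Set.mem_insert_iff, Set.mem_singleton_iff] at hv hw
  grind

/-- The vertices `p 0, …, p k` form a walk without backtracking in `G` whose two ends have
degree three and whose interior vertices have degree two. The ends may coincide. -/
structure IsThread (G : SimpleGraph V) (p : ℕ → V) (k : ℕ) : Prop where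
  pos : 0 < k
  adj : ∀ i < k, G.Adj (p i) (p (i + 1))
  ne_two : ∀ i, i + 2 ≤ k → p i ≠ p (i + 2)
  interior : ∀ i, 0 < i → i < k → (G.neighborSet (p i)).ncard = 2
  left : (G.neighborSet (p 0)).ncard = 3
  right : (G.neighborSet (p k)).ncard = 3

variable {G : SimpleGraph V}

theorem eq_or_eq_of_ncard_neighborSet_eq_two {v a b : V} (hv : (G.neighborSet v).ncard = 2)
    (ha : G.Adj v a) (hb : G.Adj v b) (hab : a ≠ b) {z : V} (hz : G.Adj v z) :
    z = a ∨ z = b := by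
  obtain ⟨c, d, -, h⟩ := Set.ncard_eq_two.1 hv
  have key : ∀ w, G.Adj v w → w = c ∨ w = d := fun w hw => by
    have : w ∈ G.neighborSet v := hw
    simpa [h] using this
  have := key a ha
  have := key b hb
  have := key z hz
  grind

/-- A walk without backtracking that leaves a vertex of degree three through vertices of
degree two does not repeat vertices. -/
theorem ne_of_interior_ncard_eq_two {p : ℕ → V} {k : ℕ}
    (hadj : ∀ i < k, G.Adj (p i) (p (i + 1))) (hne : ∀ i, i + 2 ≤ k → p i ≠ p (i + 2))
    (hint : ∀ i, 0 < i → i < k → (G.neighborSet (p i)).ncard = 2)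
    (hleft : (G.neighborSet (p 0)).ncard = 3) :
    ∀ j < k, ∀ i < j, p i ≠ p j := by
  intro j
  induction j using Nat.strong_induction_on with
  | _ j ih =>
  intro hj i hi heq
  have hj2 := hint j (by omega) hj
  rcases i with _ | i
  · rw [← heq] at hj2
    omega
  obtain ⟨j, rfl⟩ : ∃ l, j = l + 1 := ⟨j - 1, by omega⟩
  have hback : G.Adj (p (i + 1)) (p j) := heq ▸ (hadj j (by omega)).symm
  rcases eq_or_eq_of_ncard_neighborSet_eq_two (hint (i + 1) (by omega) (by omega))
    (hadj i (by omega)).symm (hadj (i + 1) (by omega)) (hne i (by omega)) hback with h | h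
  · exact ih j (by omega) (by omega) i (by omega) h.symm
  · rcases lt_trichotomy (i + 1 + 1) j with h' | h' | h'
    · exact ih j (by omega) (by omega) (i + 1 + 1) h' h.symm
    · subst h'
      exact hne (i + 1) (by omega) heq
    · have : j = i + 1 := by omega
      subst this
      exact hback.ne rfl

namespace IsThread

variable {p q : ℕ → V} {k l : ℕ}

theorem interior_adj (hp : G.IsThread p k) {i : ℕ} (hi : i + 1 < k) {z : V}
    (hz : G.Adj (p (i + 1)) z) : z = p i ∨ z = p (i + 2) :=
  eq_or_eq_of_ncard_neighborSet_eq_two (hp.interior (i + 1) (by omega) hi)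
    (hp.adj i (by omega)).symm (hp.adj (i + 1) hi) (hp.ne_two i (by omega)) hz

theorem injOn (hp : G.IsThread p k) {i j : ℕ} (hi : i < k) (hj : j < k) (h : p i = p j) :
    i = j := by
  have key := ne_of_interior_ncard_eq_two hp.adj hp.ne_two hp.interior hp.left
  rcases lt_trichotomy i j with h' | h' | h'
  · exact absurd h (key j hj i h')
  · exact h'
  · exact absurd h.symm (key i hi j h')

theorem symm (hp : G.IsThread p k) : G.IsThread (fun i => p (k - i)) k where
  pos := hp.pos
  adj i hi := by
    have := (hp.adj (k - (i + 1)) (by omega)).symm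
    rwa [show k - (i + 1) + 1 = k - i by omega] at this
  ne_two i hi := by
    have := (hp.ne_two (k - (i + 2)) (by omega)).symm
    rwa [show k - (i + 2) + 2 = k - i by omega] at this
  interior i h0 hi := hp.interior (k - i) (by omega) (by omega)
  left := hp.right
  right := by simpa using hp.left

theorem eq_zero_or_eq_of_ncard_eq_three (hp : G.IsThread p k) {i : ℕ} (hi : i ≤ k)
    (h : (G.neighborSet (p i)).ncard = 3) : i = 0 ∨ i = k := by
  by_contra hcon
  have := hp.interior i (by omega) (by omega)
  omega

theorem hasAPath (hp : G.IsThread p k) (hne : p 0 ≠ p k) : HasAPath G (k + 1) := by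
  have hlast : ∀ i < k, p i ≠ p k := by
    intro i hi h
    rcases hp.eq_zero_or_eq_of_ncard_eq_three hi.le (h ▸ hp.right) with rfl | rfl
    · exact hne h
    · exact hi.ne rfl
  refine ⟨p, fun a b ha hb hab => ?_, fun a ha => hp.adj a (by omega),
    fun a h0 ha => hp.interior a h0 (by omega), hp.left, hp.right⟩
  rcases Nat.lt_succ_iff_lt_or_eq.1 ha with ha | rfl <;>
    rcases Nat.lt_succ_iff_lt_or_eq.1 hb with hb | rfl
  · exact hp.injOn ha hb hab
  · exact absurd hab (hlast a ha)
  · exact absurd hab.symm (hlast b hb)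
  · rfl

/-- A thread is determined by its first two vertices. -/
theorem end_eq (hp : G.IsThread p k) (hq : G.IsThread q l) (h0 : p 0 = q 0) (h1 : p 1 = q 1) :
    p k = q l := by
  have agree : ∀ n, n + 1 ≤ k → n + 1 ≤ l → p n = q n ∧ p (n + 1) = q (n + 1) := by
    intro n
    induction n with
    | zero => exact fun _ _ => ⟨h0, h1⟩
    | succ n ih =>
      intro hk hl
      obtain ⟨e0, e1⟩ := ih (by omega) (by omega)
      refine ⟨e1, ?_⟩
      have hadj : G.Adj (q (n + 1)) (p (n + 2)) := e1 ▸ hp.adj (n + 1) (by omega)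
      exact (hq.interior_adj (by omega) hadj).resolve_left
        fun h => hp.ne_two n (by omega) (e0.trans h.symm)
  have hk := hp.pos
  have hl := hq.pos
  rcases lt_trichotomy k l with h | rfl | h
  · have := (agree (k - 1) (by omega) (by omega)).2
    rw [Nat.sub_add_cancel hk] at this
    have h3 := hq.interior k hk h
    rw [← this, hp.right] at h3
    omega
  · have := (agree (k - 1) (by omega) (by omega)).2
    rwa [Nat.sub_add_cancel hk] at this
  · have := (agree (l - 1) (by omega) (by omega)).2
    rw [Nat.sub_add_cancel hl] at this
    have h3 := hp.interior l hl h
    rw [this, hq.right] at h3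
    omega

/-- If the first interior vertex of a thread is adjacent to another neighbour `z` of its start,
then the thread is a triangle or it has length two and ends in `z`. -/
theorem eq_of_adj_of_one_lt (hp : G.IsThread p k) (hk : 1 < k) {z : V} (hz : G.Adj (p 0) z)
    (h : G.Adj (p 1) z) : (k = 2 ∧ p k = z) ∨ (k = 3 ∧ p k = p 0) := by
  have hz2 : z = p 2 := (hp.interior_adj (i := 0) hk h).resolve_left hz.ne'
  subst hz2
  rcases Nat.lt_or_ge 2 k with h2 | h2
  · have h3 : p 0 = p 3 := (hp.interior_adj (i := 1) h2 hz.symm).resolve_left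
      (hp.adj 0 (by omega)).ne
    rcases hp.eq_zero_or_eq_of_ncard_eq_three (i := 3) (by omega) (h3 ▸ hp.left) with h | h
    · omega
    · subst h
      exact .inr ⟨rfl, h3.symm⟩
  · have : k = 2 := by omega
    subst this
    exact .inl ⟨rfl, rfl⟩

/-- In a claw-free graph, a thread that returns to its start is a triangle. -/
theorem length_eq_three (hp : G.IsThread p k) (hclaw : ClawFree G) (h : p 0 = p k) : k = 3 := by
  have hk0 := hp.pos
  have hk3 : 3 ≤ k := by
    by_contra hcon
    have : k = 1 ∨ k = 2 := by omega
    rcases this with rfl | rfl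
    · exact (hp.adj 0 (by omega)).ne h
    · exact hp.ne_two 0 le_rfl h
  have hlast : G.Adj (p 0) (p (k - 1)) := by
    have := (hp.adj (k - 1) (by omega)).symm
    rwa [Nat.sub_add_cancel hk0, ← h] at this
  have hfirst := hp.adj 0 hk0
  have hne : p 1 ≠ p (k - 1) := fun e => by
    have := hp.injOn (by omega) (by omega) e
    omega
  obtain ⟨t, ht, htn⟩ : ∃ t ∈ G.neighborSet (p 0), t ∉ ({p 1, p (k - 1)} : Set V) :=
    Set.exists_mem_notMem_of_ncard_lt_ncard (by rw [Set.ncard_pair hne, hp.left]; omega)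
  simp only [Set.mem_insert_iff, Set.mem_singleton_iff, not_or] at htn
  have hcase : ∀ z, G.Adj (p 0) z → G.Adj (p 1) z → k = 3 := fun z hz h1 => by
    rcases hp.eq_of_adj_of_one_lt (by omega) hz h1 with e | e <;> omega
  have hcase' : ∀ z, G.Adj (p 0) z → G.Adj (p (k - 1)) z → k = 3 := fun z hz h1 => by
    rcases hp.symm.eq_of_adj_of_one_lt (z := z) (by omega) (by simpa [← h] using hz) h1
      with e | e <;> omega
  by_contra hcon
  exact hclaw ⟨p 0, p 1, p (k - 1), t, hne, Ne.symm htn.1, Ne.symm htn.2, hfirst, hlast, ht,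
    fun e => hcon (hcase _ hlast e), fun e => hcon (hcase _ ht e), fun e => hcon (hcase' _ ht e)⟩

end IsThread

/-- Every edge at a vertex of degree three starts a thread. -/
theorem exists_isThread [Finite V] (hmax : ∀ v : V, (G.neighborSet v).ncard ≤ 3)
    (hmin : ∀ v : V, 2 ≤ (G.neighborSet v).ncard) {s v : V}
    (hs : (G.neighborSet s).ncard = 3) (hsv : G.Adj s v) :
    ∃ p k, G.IsThread p k ∧ p 0 = s ∧ p 1 = v := by
  have hother : ∀ a b : V, ∃ c, G.Adj b c ∧ c ≠ a := fun a b => by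
    obtain ⟨c, hc, hca⟩ : ∃ c ∈ G.neighborSet b, c ∉ ({a} : Set V) :=
      Set.exists_mem_notMem_of_ncard_lt_ncard (by rw [Set.ncard_singleton]; exact hmin b)
    exact ⟨c, hc, hca⟩
  choose next hnext hback using hother
  let d : ℕ → V × V := fun n => (fun e : V × V => (e.2, next e.1 e.2))^[n] (s, v)
  have hd : ∀ n, d (n + 1) = ((d n).2, next (d n).1 (d n).2) :=
    fun n => Function.iterate_succ_apply' _ n _
  let p : ℕ → V := fun n => (d n).1
  have hp2 : ∀ n, p (n + 2) = next (p n) (p (n + 1)) := fun n => by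
    simp only [p, hd]
  have hp1 : p 1 = v := rfl
  have hadj : ∀ n, G.Adj (p n) (p (n + 1)) := by
    intro n
    cases n with
    | zero => exact hsv
    | succ n => rw [hp2]; exact hnext _ _
  have hne : ∀ n, p n ≠ p (n + 2) := fun n => by
    rw [hp2]; exact (hback _ _).symm
  have hex : ∃ k, 0 < k ∧ (G.neighborSet (p k)).ncard = 3 := by
    by_contra hcon
    have hint : ∀ i, 0 < i → (G.neighborSet (p i)).ncard = 2 := fun i hi => by
      have h1 := hmax (p i)
      have h2 := hmin (p i)
      have h3 : (G.neighborSet (p i)).ncard ≠ 3 := fun h => hcon ⟨i, hi, h⟩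
      omega
    have key : ∀ j, ∀ i < j, p i ≠ p j := fun j =>
      ne_of_interior_ncard_eq_two (k := j + 1) (fun i _ => hadj i) (fun i _ => hne i)
        (fun i hi _ => hint i hi) hs j (by omega)
    refine not_injective_infinite_finite p fun i j hij => ?_
    rcases lt_trichotomy i j with h | h | h
    · exact absurd hij (key j i h)
    · exact h
    · exact absurd hij.symm (key i j h)
  classical
  refine ⟨p, Nat.find hex, ⟨(Nat.find_spec hex).1, fun i _ => hadj i, fun i _ => hne i,
    fun i h0 hi => ?_, hs, (Nat.find_spec hex).2⟩, rfl, hp1⟩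
  have h1 := hmax (p i)
  have h2 := hmin (p i)
  have h3 : (G.neighborSet (p i)).ncard ≠ 3 := fun h => Nat.find_min hex hi ⟨h0, h⟩
  omega

/-- The graph on `V` joining distinct vertices of degree three that are the ends of a thread. -/
def threadGraph (G : SimpleGraph V) : SimpleGraph V where
  Adj u w := u ≠ w ∧ ∃ p k, G.IsThread p k ∧ p 0 = u ∧ p k = w
  symm := ⟨by
    rintro u w ⟨hne, p, k, hp, rfl, rfl⟩
    exact ⟨hne.symm, _, k, hp.symm, by simp, by simp⟩⟩
  loopless := ⟨fun u h => h.1 rfl⟩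

theorem threadGraph_degree_le_three [Finite V] (hmax : ∀ v : V, (G.neighborSet v).ncard ≤ 3)
    (u a b c d : V) (ha : G.threadGraph.Adj u a) (hb : G.threadGraph.Adj u b)
    (hc : G.threadGraph.Adj u c) (hd : G.threadGraph.Adj u d) :
    a = b ∨ a = c ∨ a = d ∨ b = c ∨ b = d ∨ c = d := by
  obtain ⟨-, p₁, k₁, h₁, e₁, rfl⟩ := ha
  obtain ⟨-, p₂, k₂, h₂, e₂, rfl⟩ := hb
  obtain ⟨-, p₃, k₃, h₃, e₃, rfl⟩ := hc
  obtain ⟨-, p₄, k₄, h₄, e₄, rfl⟩ := hd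
  have h12 := h₁.end_eq h₂ (e₁.trans e₂.symm)
  have h13 := h₁.end_eq h₃ (e₁.trans e₃.symm)
  have h14 := h₁.end_eq h₄ (e₁.trans e₄.symm)
  have h23 := h₂.end_eq h₃ (e₂.trans e₃.symm)
  have h24 := h₂.end_eq h₄ (e₂.trans e₄.symm)
  have h34 := h₃.end_eq h₄ (e₃.trans e₄.symm)
  by_contra hcon
  have hsub : ({p₁ 1, p₂ 1, p₃ 1, p₄ 1} : Set V) ⊆ G.neighborSet u := by
    rintro z (rfl | rfl | rfl | rfl)
    · exact e₁ ▸ h₁.adj 0 h₁.pos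
    · exact e₂ ▸ h₂.adj 0 h₂.pos
    · exact e₃ ▸ h₃.adj 0 h₃.pos
    · exact e₄ ▸ h₄.adj 0 h₄.pos
  have hcard : ({p₁ 1, p₂ 1, p₃ 1, p₄ 1} : Set V).ncard = 4 :=
    Set.ncard_eq_four.2 ⟨_, _, _, _, by tauto, by tauto, by tauto, by tauto, by tauto, by tauto, rfl⟩
  have := (Set.ncard_le_ncard hsub (Set.toFinite _)).trans (hmax u)
  omega

theorem threadGraph_adj_of_adj {p q : ℕ → V} {k l : ℕ} (hp : G.IsThread p k)
    (hq : G.IsThread q l) (h0 : p 0 = q 0) (hpk : p k ≠ p 0) (hql : q l ≠ q 0)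
    (hne : p k ≠ q l) (h1 : G.Adj (p 1) (q 1)) : G.threadGraph.Adj (p k) (q l) := by
  have short : ∀ {p q : ℕ → V} {k l : ℕ}, G.IsThread p k → G.IsThread q l → p 0 = q 0 →
      p k ≠ p 0 → p k ≠ q l → G.Adj (p 1) (q 1) → k = 1 := by
    intro p q k l hp hq h0 hpk hne h1
    by_contra hk
    have hk0 := hp.pos
    rcases hp.eq_of_adj_of_one_lt (by omega) (h0 ▸ hq.adj 0 hq.pos) h1 with ⟨-, h⟩ | ⟨-, h⟩
    · rcases hq.eq_zero_or_eq_of_ncard_eq_three (i := 1) hq.pos (h ▸ hp.right) with h' | h'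
      · omega
      · exact hne (h' ▸ h)
    · exact hpk h
  have hk := short hp hq h0 hpk hne h1
  have hl := short hq hp h0.symm hql hne.symm h1.symm
  subst hk hl
  refine ⟨hne, fun i => if i = 0 then p 1 else q 1, 1, ⟨one_pos, ?_, ?_, ?_, ?_, ?_⟩,
    by simp, by simp⟩
  · intro i hi
    have : i = 0 := by omega
    subst this
    simpa using h1
  · intro i hi
    omega
  · intro i h0 hi
    omega
  · simpa using hp.right
  · simpa using hq.right

theorem threadGraph_clawFree (hclaw : ClawFree G) (u a b c : V) (ha : G.threadGraph.Adj u a)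
    (hb : G.threadGraph.Adj u b) (hc : G.threadGraph.Adj u c) :
    a = b ∨ a = c ∨ b = c ∨ G.threadGraph.Adj a b ∨ G.threadGraph.Adj a c ∨
      G.threadGraph.Adj b c := by
  obtain ⟨n₁, p₁, k₁, h₁, e₁, rfl⟩ := ha
  obtain ⟨n₂, p₂, k₂, h₂, e₂, rfl⟩ := hb
  obtain ⟨n₃, p₃, k₃, h₃, e₃, rfl⟩ := hc
  have h12 := h₁.end_eq h₂ (e₁.trans e₂.symm)
  have h13 := h₁.end_eq h₃ (e₁.trans e₃.symm)
  have h23 := h₂.end_eq h₃ (e₂.trans e₃.symm)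
  by_contra hcon
  simp only [not_or] at hcon
  obtain ⟨m12, m13, m23, hn12, hn13, hn23⟩ := hcon
  have x₁ : p₁ k₁ ≠ p₁ 0 := e₁ ▸ n₁.symm
  have x₂ : p₂ k₂ ≠ p₂ 0 := e₂ ▸ n₂.symm
  have x₃ : p₃ k₃ ≠ p₃ 0 := e₃ ▸ n₃.symm
  exact hclaw ⟨u, p₁ 1, p₂ 1, p₃ 1, mt h12 m12, mt h13 m13, mt h23 m23,
    e₁ ▸ h₁.adj 0 h₁.pos, e₂ ▸ h₂.adj 0 h₂.pos, e₃ ▸ h₃.adj 0 h₃.pos,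
    fun h => hn12 (threadGraph_adj_of_adj h₁ h₂ (e₁.trans e₂.symm) x₁ x₂ m12 h),
    fun h => hn13 (threadGraph_adj_of_adj h₁ h₃ (e₁.trans e₃.symm) x₁ x₃ m13 h),
    fun h => hn23 (threadGraph_adj_of_adj h₂ h₃ (e₂.trans e₃.symm) x₂ x₃ m23 h)⟩

/-- In a connected graph, a nonempty set closed under adjacency contains every vertex. -/
theorem Connected.mem_of_adj_closed (hconn : G.Connected) {S : Set V} {s : V} (hs : s ∈ S)
    (hS : ∀ u v, u ∈ S → G.Adj u v → v ∈ S) (v : V) : v ∈ S := by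
  obtain ⟨w⟩ := hconn.preconnected s v
  induction w with
  | nil => exact hs
  | cons h _ ih => exact ih (hS _ _ hs h)

/-- In a connected graph, a nonempty set of vertices of degree three that is closed under
adjacency in the thread graph contains all vertices of degree three. -/
theorem mem_of_threadGraph_adj_closed [Finite V] (hconn : G.Connected)
    (hmax : ∀ v : V, (G.neighborSet v).ncard ≤ 3)
    (hmin : ∀ v : V, 2 ≤ (G.neighborSet v).ncard) {X : Set V} {s : V} (hs : s ∈ X)
    (hX3 : ∀ v ∈ X, (G.neighborSet v).ncard = 3)
    (hX : ∀ u v, u ∈ X → G.threadGraph.Adj u v → v ∈ X) (v : V)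
    (hv : (G.neighborSet v).ncard = 3) : v ∈ X := by
  let Y : Set V := {v | ∃ p k, G.IsThread p k ∧ p 0 ∈ X ∧ ∃ i ≤ k, p i = v}
  have hend : ∀ p k, G.IsThread p k → p 0 ∈ X → p k ∈ X := fun p k hp h0 => by
    by_cases h : p 0 = p k
    · exact h ▸ h0
    · exact hX _ _ h0 ⟨h, p, k, hp, rfl, rfl⟩
  have hXY : ∀ u v, u ∈ X → G.Adj u v → u ∈ Y ∧ v ∈ Y := fun u v hu huv => by
    obtain ⟨p, k, hp, rfl, rfl⟩ := exists_isThread hmax hmin (hX3 u hu) huv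
    exact ⟨⟨p, k, hp, hu, 0, by omega, rfl⟩, p, k, hp, hu, 1, hp.pos, rfl⟩
  have hsY : s ∈ Y := by
    obtain ⟨t, ht⟩ : (G.neighborSet s).Nonempty :=
      Set.nonempty_of_ncard_ne_zero (by rw [hX3 s hs]; omega)
    exact (hXY s t hs ht).1
  have hY : ∀ u v, u ∈ Y → G.Adj u v → v ∈ Y := by
    rintro _ v ⟨p, k, hp, h0, i, hi, rfl⟩ hv
    rcases i with _ | i
    · exact (hXY _ v h0 hv).2
    rcases hi.eq_or_lt with rfl | hi
    · exact (hXY _ v (hend p _ hp h0) hv).2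
    rcases hp.interior_adj hi hv with rfl | rfl
    · exact ⟨p, k, hp, h0, i, by omega, rfl⟩
    · exact ⟨p, k, hp, h0, i + 2, by omega, rfl⟩
  obtain ⟨p, k, hp, h0, i, hi, rfl⟩ := hconn.mem_of_adj_closed hsY hY v
  rcases hp.eq_zero_or_eq_of_ncard_eq_three hi hv with rfl | rfl
  · exact h0
  · exact hend p _ hp h0

theorem threadGraph_not_K4 [Finite V] (hconn : G.Connected)
    (hmax : ∀ v : V, (G.neighborSet v).ncard ≤ 3)
    (hmin : ∀ v : V, 2 ≤ (G.neighborSet v).ncard)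
    (hfour : {v : V | (G.neighborSet v).ncard = 3}.ncard ≠ 4) (a b c d : V)
    (hab : G.threadGraph.Adj a b) (hac : G.threadGraph.Adj a c) (had : G.threadGraph.Adj a d)
    (hbc : G.threadGraph.Adj b c) (hbd : G.threadGraph.Adj b d) : ¬ G.threadGraph.Adj c d := by
  intro hcd
  have h3 : ∀ u v, G.threadGraph.Adj u v → (G.neighborSet u).ncard = 3 := by
    rintro _ v ⟨-, p, k, hp, rfl, -⟩
    exact hp.left
  have hX3 : ∀ v ∈ ({a, b, c, d} : Set V), (G.neighborSet v).ncard = 3 := by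
    rintro v (rfl | rfl | rfl | rfl)
    exacts [h3 _ _ hab, h3 _ _ hbc, h3 _ _ hcd, h3 _ _ hcd.symm]
  have nab := hab.ne
  have nac := hac.ne
  have nad := had.ne
  have nbc := hbc.ne
  have nbd := hbd.ne
  have ncd := hcd.ne
  have hX : ∀ u v, u ∈ ({a, b, c, d} : Set V) → G.threadGraph.Adj u v →
      v ∈ ({a, b, c, d} : Set V) := by
    intro u v hu hv
    simp only [Set.mem_insert_iff, Set.mem_singleton_iff] at hu ⊢
    have key := threadGraph_degree_le_three hmax u
    rcases hu with rfl | rfl | rfl | rfl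
    · have := key b c d v hab hac had hv
      tauto
    · have := key a c d v hab.symm hbc hbd hv
      tauto
    · have := key a b d v hac.symm hbc.symm hcd hv
      tauto
    · have := key a b c v had.symm hbd.symm hcd.symm hv
      tauto
  have heq : {v : V | (G.neighborSet v).ncard = 3} = {a, b, c, d} :=
    Set.Subset.antisymm
      (mem_of_threadGraph_adj_closed hconn hmax hmin (s := a) (by simp) hX3 hX) hX3
  exact hfour (heq ▸ Set.ncard_eq_four.2 ⟨a, b, c, d, nab, nac, nad, nbc, nbd, ncd, rfl⟩)

/-- `f` is a coloring of `S` that is compatible with being a dynamic coloring of `G`, where `S`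
contains all vertices of degree three and all neighbours of its vertices of degree two. -/
structure IsPartialDynamicColoring (G : SimpleGraph V) (S : Set V) (f : V → Fin 3) : Prop where
  mem : ∀ v, (G.neighborSet v).ncard = 3 → v ∈ S
  closed : ∀ u v, u ∈ S → (G.neighborSet u).ncard = 2 → G.Adj u v → v ∈ S
  proper : ∀ u v, u ∈ S → v ∈ S → G.Adj u v → f u ≠ f v
  rainbow : ∀ u v w, u ∈ S → (G.neighborSet u).ncard = 2 → G.Adj u v → G.Adj u w → v ≠ w →
    f v ≠ f w
  thread : ∀ u v, G.threadGraph.Adj u v → f u ≠ f v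

/-- A partial coloring extends along a thread with uncolored first interior vertex. -/
theorem IsPartialDynamicColoring.exists_extension {S : Set V} {f : V → Fin 3}
    (hf : G.IsPartialDynamicColoring S f) (hclaw : ClawFree G)
    (hA : ∀ j : ℕ, 0 < j → ¬ HasAPath G (3 * j + 1)) {p : ℕ → V} {k : ℕ}
    (hp : G.IsThread p k) (h1 : p 1 ∉ S) :
    ∃ S' f', G.IsPartialDynamicColoring S' f' ∧ S ⊂ S' := by
  classical
  have hk1 : 1 < k := by
    rcases (Nat.succ_le_iff.2 hp.pos).eq_or_lt with h | h
    · exact absurd (hf.mem _ (by simpa [← h] using hp.right)) h1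
    · exact h
  have hout : ∀ i, i + 1 < k → p (i + 1) ∉ S := by
    intro i
    induction i with
    | zero => exact fun _ => h1
    | succ i ih =>
      intro hi hmem
      exact ih (by omega) (hf.closed _ _ hmem (hp.interior _ (by omega) hi)
        (hp.adj (i + 1) (by omega)).symm)
  have hp0 : p 0 ∈ S := hf.mem _ hp.left
  have hpk : p k ∈ S := hf.mem _ hp.right
  have hends : ∀ x y r : Fin 3, (r ≠ 0 → x ≠ y) → (r = 0 → x = y) → ∃ e, e ≠ 0 ∧ y = x + e * r := by
    decide
  obtain ⟨e, he, hek⟩ := hends (f (p 0)) (f (p k)) (Fin.ofNat 3 k)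
    (fun hk => by
      by_cases h : p 0 = p k
      · exact absurd (by rw [hp.length_eq_three hclaw h]; rfl) hk
      · exact hf.thread _ _ ⟨h, p, k, hp, rfl, rfl⟩)
    (fun hk => by
      by_cases h : p 0 = p k
      · rw [h]
      · have hmod : k % 3 = 0 := congrArg Fin.val hk
        refine absurd (hp.hasAPath h) ?_
        have := hA (k / 3) (by omega)
        rwa [show 3 * (k / 3) + 1 = k + 1 by omega] at this)
  let q : ℕ → Fin 3 := fun i => f (p 0) + e * (Fin.ofNat 3 i)
  have hcast : ∀ i m, Fin.ofNat 3 (i + m) = Fin.ofNat 3 i + Fin.ofNat 3 m := fun i m => by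
    ext
    simp [Fin.ofNat, Fin.val_add]
  have hdiff : ∀ x e r : Fin 3, e ≠ 0 → x + e * r ≠ x + e * (r + Fin.ofNat 3 1) ∧
      x + e * r ≠ x + e * (r + Fin.ofNat 3 2) := by
    decide
  have hq1 : ∀ i, q i ≠ q (i + 1) := fun i => by
    simp only [q, hcast i 1]
    exact (hdiff _ _ _ he).1
  have hq2 : ∀ i, q i ≠ q (i + 2) := fun i => by
    simp only [q, hcast i 2]
    exact (hdiff _ _ _ he).2
  let f' : V → Fin 3 := fun v =>
    if h : ∃ i, i + 1 < k ∧ p (i + 1) = v then q (h.choose + 1) else f v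
  have hS : ∀ v ∈ S, f' v = f v := fun v hv =>
    dif_neg fun ⟨i, hi, h⟩ => hout i hi (h ▸ hv)
  have hint : ∀ i, i + 1 < k → f' (p (i + 1)) = q (i + 1) := fun i hi => by
    have h : ∃ j, j + 1 < k ∧ p (j + 1) = p (i + 1) := ⟨i, hi, rfl⟩
    simp only [f', dif_pos h]
    exact congrArg q (hp.injOn h.choose_spec.1 hi h.choose_spec.2)
  have hfq : ∀ i ≤ k, f' (p i) = q i := by
    intro i hi
    rcases i with _ | i
    · rw [hS _ hp0]
      simp [q]
    rcases hi.eq_or_lt with rfl | hi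
    · rw [hS _ hpk, hek]
    · exact hint i hi
  let S' : Set V := S ∪ {v | ∃ i, i + 1 < k ∧ p (i + 1) = v}
  have hS' : ∀ i ≤ k, p i ∈ S' := by
    intro i hi
    rcases i with _ | i
    · exact .inl hp0
    rcases hi.eq_or_lt with rfl | hi
    · exact .inl hpk
    · exact .inr ⟨i, hi, rfl⟩
  have hinner : ∀ i v, i + 1 < k → G.Adj (p (i + 1)) v → f' (p (i + 1)) ≠ f' v := by
    intro i v hi hv
    rw [hint i hi]
    rcases hp.interior_adj hi hv with rfl | rfl
    · rw [hfq i (by omega)]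
      exact (hq1 i).symm
    · rw [hfq (i + 2) (by omega)]
      exact hq1 (i + 1)
  have h3S : ∀ u v, G.threadGraph.Adj u v → u ∈ S := by
    rintro _ v ⟨-, r, l, hr, rfl, -⟩
    exact hf.mem _ hr.left
  refine ⟨S', f', ⟨fun v hv => .inl (hf.mem v hv), ?_, ?_, ?_, ?_⟩,
    ⟨Set.subset_union_left, fun h => h1 (h (hS' 1 hk1.le))⟩⟩
  · rintro u v (hu | ⟨i, hi, rfl⟩) hu2 huv
    · exact .inl (hf.closed u v hu hu2 huv)
    · rcases hp.interior_adj hi huv with rfl | rfl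
      · exact hS' i (by omega)
      · exact hS' (i + 2) (by omega)
  · rintro u v (hu | ⟨i, hi, rfl⟩) hv huv
    · rcases hv with hv | ⟨i, hi, rfl⟩
      · rw [hS u hu, hS v hv]
        exact hf.proper u v hu hv huv
      · exact (hinner i u hi huv.symm).symm
    · exact hinner i v hi huv
  · rintro u v w (hu | ⟨i, hi, rfl⟩) hu2 huv huw hvw
    · rw [hS v (hf.closed u v hu hu2 huv), hS w (hf.closed u w hu hu2 huw)]
      exact hf.rainbow u v w hu hu2 huv huw hvw
    · have h02 : f' (p i) ≠ f' (p (i + 2)) := by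
        rw [hfq i (by omega), hfq (i + 2) (by omega)]
        exact hq2 i
      rcases hp.interior_adj hi huv with rfl | rfl <;>
        rcases hp.interior_adj hi huw with rfl | rfl
      · exact absurd rfl hvw
      · exact h02
      · exact h02.symm
      · exact absurd rfl hvw
  · intro u v huv
    rw [hS u (h3S u v huv), hS v (h3S v u huv.symm)]
    exact hf.thread u v huv

end SimpleGraph

/-- A connected claw-free graph with `Δ(G) = 3`, minimum degree at least 2, containing
no `A_{3j+1}` (`j ≥ 1`), in which the number of vertices of degree 3 is not 4,
has a dynamic 3-coloring. -/
theorem dynamic_three_colorable_of_degree_three_count_ne_four {V : Type*} [Fintype V]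
    (G : SimpleGraph V) (hconn : G.Connected) (hclaw : ClawFree G)
    (hmax : ∀ v : V, (G.neighborSet v).ncard ≤ 3)
    (hmax' : ∃ v : V, (G.neighborSet v).ncard = 3)
    (hmin : ∀ v : V, 2 ≤ (G.neighborSet v).ncard)
    (hA : ∀ j : ℕ, 0 < j → ¬ HasAPath G (3 * j + 1))
    (hfour : {v : V | (G.neighborSet v).ncard = 3}.ncard ≠ 4) :
    ∃ c : V → Fin 3, IsDynamicColoring G 3 c := by
  obtain ⟨f₀, hf₀⟩ := exists_three_coloring_of_clawFree G.threadGraph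
    (threadGraph_degree_le_three hmax) (threadGraph_clawFree hclaw)
    (threadGraph_not_K4 hconn hmax hmin hfour)
  have hdeg : ∀ v : V, (G.neighborSet v).ncard = 2 ∨ (G.neighborSet v).ncard = 3 := fun v => by
    have := hmax v
    have := hmin v
    omega
  obtain ⟨S, hS⟩ : ∃ S : Set V, Maximal (fun S => ∃ f, G.IsPartialDynamicColoring S f) S := by
    refine (Set.toFinite _).exists_maximal ⟨{v : V | (G.neighborSet v).ncard = 3}, f₀,
      fun v hv => hv, fun u v hu hu2 _ => ?_, fun u v hu hv huv => ?_,
      fun u v w hu hu2 _ _ _ => ?_, hf₀⟩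
    · rw [Set.mem_ofPred_eq] at hu
      omega
    · refine hf₀ u v ⟨huv.ne, fun i => if i = 0 then u else v, 1,
        ⟨one_pos, fun i hi => ?_, fun i hi => ?_, fun i h0 hi => ?_, by simpa using hu,
          by simpa using hv⟩, by simp, by simp⟩
      · have : i = 0 := by omega
        subst this
        simpa using huv
      · omega
      · omega
    · rw [Set.mem_ofPred_eq] at hu
      omega
  obtain ⟨f, hf⟩ := hS.prop
  obtain ⟨t, ht⟩ := hmax'
  have huniv : ∀ v, v ∈ S := by
    refine hconn.mem_of_adj_closed (hf.mem t ht) fun u v hu huv => ?_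
    rcases hdeg u with hu2 | hu3
    · exact hf.closed u v hu hu2 huv
    · by_contra hv
      obtain ⟨p, k, hp, rfl, rfl⟩ := exists_isThread hmax hmin hu3 huv
      obtain ⟨S', f', hf', hSS'⟩ := hf.exists_extension hclaw hA hp hv
      exact hSS'.2 (hS.le_of_ge ⟨f', hf'⟩ hSS'.1)
  refine ⟨f, fun u v huv => hf.proper u v (huniv u) (huniv v) huv, fun v _ => ?_⟩
  rcases hdeg v with h | h
  · obtain ⟨a, b, hab, hN⟩ := Set.ncard_eq_two.1 h
    have ha : G.Adj v a := by
      change a ∈ G.neighborSet v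
      simp [hN]
    have hb : G.Adj v b := by
      change b ∈ G.neighborSet v
      simp [hN]
    exact ⟨a, b, ha, hb, hf.rainbow v a b (huniv v) h ha hb hab⟩
  · obtain ⟨a, b, c, hab, hac, hbc, hN⟩ := Set.ncard_eq_three.1 h
    have ha : G.Adj v a := by
      change a ∈ G.neighborSet v
      simp [hN]
    have hb : G.Adj v b := by
      change b ∈ G.neighborSet v
      simp [hN]
    have hc : G.Adj v c := by
      change c ∈ G.neighborSet v
      simp [hN]
    have hproper : ∀ {x y}, G.Adj x y → f x ≠ f y :=
      fun h => hf.proper _ _ (huniv _) (huniv _) h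
    by_cases h1 : G.Adj a b
    · exact ⟨a, b, ha, hb, hproper h1⟩
    by_cases h2 : G.Adj a c
    · exact ⟨a, c, ha, hc, hproper h2⟩
    by_cases h3 : G.Adj b c
    · exact ⟨b, c, hb, hc, hproper h3⟩
    · exact (hclaw ⟨v, a, b, c, hab, hac, hbc, ha, hb, hc, h1, h2, h3⟩).elim
end
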